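/- arXiv:1003.3046 — 3 statements merged into one kernel-verified Lean document; each statement's English description precedes it below -/
import Mathlib

section
/- Let R be a commutative ring, and x_1,...,x_d, y_1,...,y_d elements with y_i = Σ_j a_ij x_j for a matrix A = (a_ij). If r ∈ (x_1,...,x_d)^lim, then (det A) · r ∈ (y_1,...,y_d)^lim. In particular, multiplication by det A induces a well-defined map R/(x)^lim → R/(y)^lim. -/
/-!
Both `Matrix.diagonal (y ^ (N - 1)) * A` and, for `N` large enough, a matrix of the form
`B * Matrix.diagonal (x ^ (t - 1))` carry `x` to the vector `z = y ^ N`; here `B` expresses `y ^ N`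
through `x ^ t`.

* Cramer's rule (`det_mul_mem`) gives `det B * (x ^ t) ⊆ (y ^ N)`, so a relation
  `(∏ x) ^ (t - 1) * r ∈ (x ^ t)` puts the second determinant times `r` into `(z)`.
* Two matrices carrying `x` to the same `z` have determinants that agree modulo
  `(z ^ 2) : ∏ z` (`prod_mul_det_sub_mem`).  Exchanging one row at a time, this reduces to a matrix
  `E` for which `E x` is `z` with its `i`-th entry replaced by zero. By Cramer's rule
  `det E * z i ∈ (z k : k ≠ i)`, and multiplying by the remaining `z k` gives the claim.

Hence `∏ z * (∏ y) ^ (N - 1) * det A * r ∈ (z ^ 2)`, which is the defining relation of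
`(y)^lim` with exponent `2 * N`.
-/


/-- The limit closure of a finite sequence `x` in a commutative ring:
`(x)^lim = ⋃_{t ≥ 1} ((x_1^t, …, x_n^t) : (x_1 ⋯ x_n)^{t-1})`. -/
def limClosure {R : Type*} [CommRing R] {n : ℕ} (x : Fin n → R) : Set R :=
  {r : R | ∃ t : ℕ, 1 ≤ t ∧
    (∏ i, x i) ^ (t - 1) * r ∈ Ideal.span (Set.range fun i => x i ^ t)}

/-- Cramer's rule in ideal form: `det M` multiplies the ideal `(x)` into the ideal `(M x)`. -/
theorem det_mul_mem {R : Type*} [CommRing R] {d : ℕ}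
    (x z : Fin d → R) (M : Matrix (Fin d) (Fin d) R) (hM : M.mulVec x = z)
    (a : R) (ha : a ∈ Ideal.span (Set.range x)) :
    M.det * a ∈ Ideal.span (Set.range z) := by
  obtain ⟨c, rfl⟩ := Ideal.mem_span_range_iff_exists_fun.1 ha
  rw [Finset.mul_sum]
  refine Ideal.sum_mem _ fun j _ => ?_
  have h : M.det * x j = ∑ k, M.adjugate j k * z k := by
    have h1 : (M.adjugate.mulVec (M.mulVec x)) j = M.det * x j := by
      rw [Matrix.mulVec_mulVec, Matrix.adjugate_mul, Matrix.smul_mulVec, Matrix.one_mulVec]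
      rfl
    rw [← h1, hM]
    rfl
  rw [mul_left_comm, h]
  exact Ideal.mul_mem_left _ _ (Ideal.sum_mem _ fun k _ =>
    Ideal.mul_mem_left _ _ (Ideal.subset_span ⟨k, rfl⟩))

/-- If `p * w k ∈ J` for all `k`, then `p` multiplies the whole ideal `(w)` into `J`. -/
theorem mul_mem_of_mem_span {R : Type*} [CommRing R] {d : ℕ} (w : Fin d → R) (J : Ideal R)
    (p a : R) (h : ∀ k, p * w k ∈ J) (ha : a ∈ Ideal.span (Set.range w)) : p * a ∈ J := by
  obtain ⟨c, rfl⟩ := Ideal.mem_span_range_iff_exists_fun.1 ha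
  rw [Finset.mul_sum]
  refine Ideal.sum_mem _ fun j _ => ?_
  rw [mul_left_comm]
  exact Ideal.mul_mem_left _ _ (h j)

/-- The one-row case of the comparison of determinants: `E x` agrees with `z` except for a zero in
position `i`. -/
theorem prod_mul_det_mem {R : Type*} [CommRing R] {d : ℕ}
    (x z : Fin d → R) (E : Matrix (Fin d) (Fin d) R) (i : Fin d)
    (hE : E.mulVec x = Function.update z i 0) (hz : z i ∈ Ideal.span (Set.range x)) :
    (∏ k, z k) * E.det ∈ Ideal.span (Set.range fun k => z k ^ 2) := by
  have h := det_mul_mem x _ E hE (z i) hz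
  rw [← Finset.mul_prod_erase _ _ (Finset.mem_univ i)]
  rw [show z i * (∏ k ∈ Finset.univ.erase i, z k) * E.det
    = (∏ k ∈ Finset.univ.erase i, z k) * (E.det * z i) by ring]
  refine mul_mem_of_mem_span _ _ _ _ (fun k => ?_) h
  by_cases hk : k = i
  · subst hk
    simp
  · rw [Function.update_of_ne hk,
      ← Finset.mul_prod_erase _ _ (Finset.mem_erase.2 ⟨hk, Finset.mem_univ k⟩), mul_right_comm,
      ← pow_two]
    exact Ideal.mul_mem_right _ _ (Ideal.subset_span ⟨k, rfl⟩)

/-- Two matrices carrying `x` to the same `z` have determinants that agree modulo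
`(z ^ 2) : ∏ z`. -/
theorem prod_mul_det_sub_mem {R : Type*} [CommRing R] {d : ℕ}
    (x z : Fin d → R) (C C' : Matrix (Fin d) (Fin d) R)
    (hC : C.mulVec x = z) (hC' : C'.mulVec x = z) :
    (∏ k, z k) * (C.det - C'.det) ∈ Ideal.span (Set.range fun k => z k ^ 2) := by
  classical
  have hz : ∀ i, z i ∈ Ideal.span (Set.range x) := fun i =>
    Ideal.mem_span_range_iff_exists_fun.2 ⟨C i, congrFun hC i⟩
  -- `S` is the set of rows of `C'` already exchanged for those of `C`.
  have key : ∀ S : Finset (Fin d),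
      (∏ k, z k) * (Matrix.det (Matrix.of fun i => if i ∈ S then C i else C' i) - C'.det)
        ∈ Ideal.span (Set.range fun k => z k ^ 2) := by
    intro S
    induction S using Finset.induction_on with
    | empty =>
      have : (Matrix.of fun i => if i ∈ (∅ : Finset (Fin d)) then C i else C' i) = C' := by
        ext i j; simp
      rw [this]; simp
    | insert i S hi ih =>
      set M : Matrix (Fin d) (Fin d) R := Matrix.of fun i => if i ∈ S then C i else C' i with hM
      have h1 : (Matrix.of fun k => if k ∈ insert i S then C k else C' k)
          = M.updateRow i (M i + (C i - C' i)) := by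
        ext k j
        by_cases hk : k = i
        · subst hk; simp [hM, hi]
        · simp [hM, hk]
      have h2 : (M.updateRow i (C i - C' i)).mulVec x = Function.update z i 0 := by
        ext k
        by_cases hk : k = i
        · subst hk
          have e1 : C k ⬝ᵥ x = z k := congrFun hC k
          have e2 : C' k ⬝ᵥ x = z k := congrFun hC' k
          have e3 : (C k - C' k) ⬝ᵥ x = 0 := by rw [sub_dotProduct, e1, e2, sub_self]
          simp only [Matrix.mulVec, Matrix.updateRow_self, Function.update_self]
          exact e3
        · have e1 : C k ⬝ᵥ x = z k := congrFun hC k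
          have e2 : C' k ⬝ᵥ x = z k := congrFun hC' k
          have e3 : M k ⬝ᵥ x = z k := by
            by_cases hS : k ∈ S
            · have : M k = C k := by ext j; simp [hM, hS]
              rw [this, e1]
            · have : M k = C' k := by ext j; simp [hM, hS]
              rw [this, e2]
          simp only [Matrix.mulVec, Function.update_of_ne hk]
          rw [← e3]
          congr 1
          ext j
          simp [hk]
      rw [h1, Matrix.det_updateRow_add, Matrix.updateRow_eq_self, add_sub_right_comm, mul_add]
      exact Ideal.add_mem _ ih (prod_mul_det_mem x z _ i h2 (hz i))
  have hU : (Matrix.of fun i => if i ∈ (Finset.univ : Finset (Fin d)) then C i else C' i) = C := by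
    ext i j; simp
  have := key Finset.univ
  rwa [hU] at this

/-- multiplication by `det A` sends `(x)^lim` into `(y)^lim`, so it
induces a well-defined map `R/(x)^lim → R/(y)^lim`. -/
theorem stmt1 {R : Type*} [CommRing R] {d : ℕ}
    (x y : Fin d → R) (A : Matrix (Fin d) (Fin d) R)
    (hA : ∀ i, y i = ∑ j, A i j * x j)
    (r : R) (hr : r ∈ limClosure x) :
    A.det * r ∈ limClosure y := by
  obtain ⟨t, ht, hr⟩ := hr
  obtain ⟨s, rfl⟩ : ∃ s, t = s + 1 := ⟨t - 1, by omega⟩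
  rw [Nat.add_sub_cancel] at hr
  obtain ⟨n, hn⟩ : ∃ n : ℕ, Ideal.span (Set.range x) ^ n
      ≤ Ideal.span (Set.range fun i => x i ^ (s + 1)) := by
    refine Ideal.exists_pow_le_of_le_radical_of_fg ?_
      (Submodule.fg_span (Set.finite_range x))
    rw [Ideal.span_le]
    rintro _ ⟨i, rfl⟩
    exact ⟨s + 1, Ideal.subset_span ⟨i, rfl⟩⟩
  have hy : ∀ i, ∃ b : Fin d → R, ∑ j, b j * x j ^ (s + 1) = y i ^ (n + 1) := by
    intro i
    refine Ideal.mem_span_range_iff_exists_fun.1 ?_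
    have hyi : y i ∈ Ideal.span (Set.range x) :=
      Ideal.mem_span_range_iff_exists_fun.2 ⟨A i, (hA i).symm⟩
    rw [pow_succ]
    exact Ideal.mul_mem_right _ _ (hn (Ideal.pow_mem_pow hyi n))
  choose b hb using hy
  set z : Fin d → R := fun i => y i ^ (n + 1) with hz
  have hB : (Matrix.of b).mulVec (fun j => x j ^ (s + 1)) = z := funext hb
  have hC : (Matrix.of b * Matrix.diagonal fun j => x j ^ s).mulVec x = z := by
    rw [← Matrix.mulVec_mulVec, ← hB]
    congr 1
    ext j
    rw [Matrix.mulVec_diagonal, pow_succ]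
  have hC' : ((Matrix.diagonal fun i => y i ^ n) * A).mulVec x = z := by
    rw [← Matrix.mulVec_mulVec]
    ext i
    rw [Matrix.mulVec_diagonal, hz]
    change y i ^ n * (∑ j, A i j * x j) = y i ^ (n + 1)
    rw [← hA, pow_succ]
  have h1 := prod_mul_det_sub_mem x z _ _ hC hC'
  have h2 := det_mul_mem _ z _ hB _ hr
  have h3 : (∏ k, z k) * ((Matrix.of b).det * ((∏ i, x i) ^ s * r))
      ∈ Ideal.span (Set.range fun k => z k ^ 2) := by
    refine mul_mem_of_mem_span _ _ _ _ (fun k => ?_) h2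
    rw [← Finset.mul_prod_erase _ _ (Finset.mem_univ k), mul_right_comm, ← pow_two]
    exact Ideal.mul_mem_right _ _ (Ideal.subset_span ⟨k, rfl⟩)
  refine ⟨(n + 1) * 2, by omega, ?_⟩
  have h4 := Ideal.sub_mem _ h3 (Ideal.mul_mem_right r _ h1)
  rw [Matrix.det_mul, Matrix.det_mul, Matrix.det_diagonal, Matrix.det_diagonal,
    Finset.prod_pow _ s x, Finset.prod_pow _ n y] at h4
  have hzp : ∏ k, z k = (∏ i, y i) ^ (n + 1) := Finset.prod_pow _ _ _
  have hz2 : (fun k => z k ^ 2) = fun i => y i ^ ((n + 1) * 2) := by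
    ext k
    rw [hz, pow_mul]
  rw [hz2, hzp] at h4
  rw [show (n + 1) * 2 - 1 = (n + 1) + n by omega, pow_add]
  convert h4 using 1
  ring
end

section
/- Let (R,m) be a complete local domain of dimension d. If y_1,...,y_d are elements of R with H^d_{(y_1,...,y_d)}(R) ≠ 0, then y_1,...,y_d form a system of parameters, i.e., dim R/(y_1,...,y_d) = 0. -/
/-!
Let `I = (y_1, …, y_d)` and suppose `dim R/I > 0`, so that `I` lies in a prime `p ≠ m`. The module
`H^d_I(R)` is the colimit of `Ext^d(R/I^t, R)`, and it has to be shown that every class `e` in one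
of these groups dies at a later stage (`VAN`, `subsingleton_localCohomology`).

The main point is the existence of one element `a ≠ 0` killing `Ext^d(T, R)` for all finitely
generated `T` of positive depth (`annihilate_top`). For `m`-torsion modules `T` and a module `M` with
finite Bass numbers and `H^{i+1}_m(M) = 0`, such an element kills `Ext^{i+1}(T, M)`: by dimension
shifting along embeddings `M ⊆ E^n × J`, where `E` is the injective hull of the residue field and `J`
is injective without torsion, it is enough to treat `i = 0`, where the torsion part of
`(E^n × J)/M` is a quotient of `E^n`. By Matlis duality such a quotient corresponds to a submodule of
`R^n`, and since `R` is a domain this is a direct summand up to a nonzero factor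
(`IsHull.annihilate`). Grothendieck's vanishing theorem (`VAN.of_dim`) gives the hypothesis for
`M = R` in degrees above `d`. If `x` is regular on `T`, annihilation in degree `j + 1` for the
modules `T/x^n T` shows that `a • e` is infinitely divisible by `x`, hence zero, in degree `j`
(`annihilate_of_depth_pos`); induction on `dim T` then covers all finitely generated `T` in degrees
above `d`, and those of positive depth in degree `d`.

Let `sat I t` be the saturation of `I^t` with respect to `m`. As `p ≠ m`, these ideals have zero
intersection by Krull's theorem in the localization at `p`, so by Chevalley's theorem and the
Artin–Rees lemma they are cofinal with the powers of `I` (`exists_sat_le`); and `R/sat I t` has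
positive depth. Now `dim R/a < d`, so `H^d_I(R/a) = 0`; hence at a later stage `e = a • e'`. Passing to
a still later stage through some `R/sat I t`, the class `a • e'` becomes zero
(`VAN.hartshorne_lichtenbaum`).
-/

universe u

namespace HLV

open CategoryTheory Abelian Opposite Limits IsLocalRing
open scoped Pointwise

variable {R : Type u} [CommRing R]

/-! ### The two constructions of Ext -/

/-- Every class `x` in the left derived functor of `Hom(-, Y)`, viewed as a functor to the opposite
category, is represented by a class `e` in `Ext^{n+1}(X, Y)` such that `x` dies along every morphism
along which `e` dies. Both are computed by cocycles on a projective resolution of `X`; this one-sided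
comparison is all that is needed, so the isomorphism between the two is not built. -/
lemma leftDerived_class {X Y : ModuleCat.{u} R} (n : ℕ)
    (x : (((((linearYoneda R (ModuleCat.{u} R)).obj Y).rightOp).leftDerived (n+1)).obj X).unop) :
    ∃ e : Abelian.Ext.{u} X Y (n+1), ∀ (X' : ModuleCat.{u} R) (g : X' ⟶ X),
      (Ext.mk₀ g).comp e (zero_add _) = 0 →
      (((((linearYoneda R (ModuleCat.{u} R)).obj Y).rightOp).leftDerived (n+1)).map g).unop x
        = 0 := by
  set G : ModuleCat.{u} R ⥤ (ModuleCat.{u} R)ᵒᵖ := ((linearYoneda R (ModuleCat.{u} R)).obj Y).rightOp with hG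
  let P := projectiveResolution X
  let K := (G.mapHomologicalComplex _).obj P.complex
  obtain ⟨z, rfl⟩ : ∃ z : (K.homology (n+1)).unop, (P.isoLeftDerivedObj G (n+1)).hom.unop z = x := by
    have := (ModuleCat.epi_iff_surjective (P.isoLeftDerivedObj G (n+1)).hom.unop).1 inferInstance x
    exact this
  obtain ⟨w, rfl⟩ : ∃ w : (K.opcycles (n+1)).unop, (K.homologyι (n+1)).unop w = z :=
    (ModuleCat.epi_iff_surjective _).1 inferInstance z
  -- The cocycle on the resolution representing `x`.
  let f : P.complex.X (n+1) ⟶ Y := (K.pOpcycles (n+1)).unop w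
  have hf : P.complex.d (n+2) (n+1) ≫ f = 0 := by
    have h1 : (K.d (n+2) (n+1) ≫ K.pOpcycles (n+1)).unop w = 0 := by
      rw [K.d_pOpcycles]; rfl
    exact h1
  refine ⟨P.extMk f (n+2) rfl hf, fun X' g hg => ?_⟩
  let Q := projectiveResolution X'
  have hφ : (ProjectiveResolution.lift g Q P).f 0 ≫ P.π.f 0 = Q.π.f 0 ≫ g := by
    have := congrArg (fun t => HomologicalComplex.Hom.f t 0)
      (ProjectiveResolution.lift_commutes g Q P)
    simp only [HomologicalComplex.comp_f, ChainComplex.single₀_map_f_zero] at this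
    exact this
  let φ : ProjectiveResolution.Hom Q P g :=
    ⟨ProjectiveResolution.lift g Q P, hφ⟩
  rw [ProjectiveResolution.mk₀_comp_extMk _ _ _ _ φ, ProjectiveResolution.extMk_eq_zero_iff _ _ _ _ _ n rfl] at hg
  -- The pulled back cocycle is the coboundary of `h`.
  obtain ⟨h, hh⟩ := hg
  let K' := (G.mapHomologicalComplex _).obj Q.complex
  let ψ : K' ⟶ K := (G.mapHomologicalComplex _).map φ.hom
  have key : (HomologicalComplex.opcyclesMap ψ (n+1)).unop w = (K'.fromOpcycles (n+1) n).unop h := by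
    apply (ModuleCat.mono_iff_injective (K'.pOpcycles (n+1)).unop).1 inferInstance
    have e1 : (K'.pOpcycles (n+1) ≫ HomologicalComplex.opcyclesMap ψ (n+1)).unop w =
       (ψ.f (n+1) ≫ K.pOpcycles (n+1)).unop w := by
      rw [HomologicalComplex.p_opcyclesMap]
    have e2 : (K'.pOpcycles (n+1) ≫ K'.fromOpcycles (n+1) n).unop h = (K'.d (n+1) n).unop h := by
      rw [K'.p_fromOpcycles]
    refine (e1.trans ?_).trans e2.symm
    exact hh.symm
  let α : (G.leftDerived (n+1)).obj X ⟶ K.homology (n+1) := (P.isoLeftDerivedObj G (n+1)).hom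
  let β : (G.leftDerived (n+1)).obj X' ⟶ K'.homology (n+1) := (Q.isoLeftDerivedObj G (n+1)).hom
  have nat : (G.leftDerived (n+1)).map g ≫ α = β ≫ HomologicalComplex.homologyMap ψ (n+1) :=
    ProjectiveResolution.isoLeftDerivedObj_hom_naturality g Q P φ.hom hφ G (n+1)
  have e3 : ((G.leftDerived (n+1)).map g ≫ α ≫ K.homologyι (n+1)).unop w = 0 := by
    have : (G.leftDerived (n+1)).map g ≫ α ≫ K.homologyι (n+1)
      = (β ≫ K'.homologyι (n+1)) ≫ HomologicalComplex.opcyclesMap ψ (n+1) := by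
      rw [← Category.assoc, nat, Category.assoc, Category.assoc,
        HomologicalComplex.homologyι_naturality ψ (n+1)]
    rw [this]
    change (β ≫ K'.homologyι (n+1)).unop ((HomologicalComplex.opcyclesMap ψ (n+1)).unop w) = 0
    rw [key]
    have : ((β ≫ K'.homologyι (n+1)) ≫ K'.fromOpcycles (n+1) n).unop h = 0 := by
      rw [Category.assoc, K'.homologyι_comp_fromOpcycles, comp_zero]; rfl
    exact this
  exact e3

/-- The comparison `leftDerived_class` for the derived functor `_root_.Ext`, which enters the
definition of local cohomology, against the group `Abelian.Ext`, which has the long exact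
sequences. -/
lemma old_ext_class {X Y : ModuleCat.{u} R} (n : ℕ)
    (x : ((_root_.Ext R (ModuleCat.{u} R) (n+1)).obj (op X)).obj Y) :
    ∃ e : Abelian.Ext.{u} X Y (n+1), ∀ (X' : ModuleCat.{u} R) (g : X' ⟶ X),
      (Ext.mk₀ g).comp e (zero_add _) = 0 →
      (((_root_.Ext R (ModuleCat.{u} R) (n+1)).map g.op).app Y) x = 0 :=
  leftDerived_class n x

/-! ### Extensions of modules and long exact sequences -/

section Ext

/-- The group `Ext^i_R(M, N)`. -/
abbrev EXT (R : Type u) [CommRing R] (M N : Type u) [AddCommGroup M] [Module R M]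
    [AddCommGroup N] [Module R N] (i : ℕ) : Type u :=
  Abelian.Ext.{u} (ModuleCat.of R M) (ModuleCat.of R N) i

variable {A B C M N L : Type u} [AddCommGroup A] [Module R A] [AddCommGroup B] [Module R B]
  [AddCommGroup C] [Module R C] [AddCommGroup M] [Module R M] [AddCommGroup N] [Module R N]
  [AddCommGroup L] [Module R L]

/-- Contravariant functoriality of `Ext^i(-, N)`. -/
noncomputable def pre {i : ℕ} (f : M →ₗ[R] N) : EXT R N L i →ₗ[R] EXT R M L i where
  toFun e := (Ext.mk₀ (ModuleCat.ofHom f)).comp e (zero_add i)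
  map_add' _ _ := Ext.comp_add _ _ _ _
  map_smul' _ _ := Ext.comp_smul _ _ _ _

/-- Covariant functoriality of `Ext^i(M, -)`. -/
noncomputable def post {i : ℕ} (g : N →ₗ[R] L) : EXT R M N i →ₗ[R] EXT R M L i where
  toFun e := e.comp (Ext.mk₀ (ModuleCat.ofHom g)) (add_zero i)
  map_add' _ _ := Ext.add_comp _ _ _ _
  map_smul' _ _ := Ext.smul_comp _ _ _ _

lemma pre_apply {i : ℕ} (f : M →ₗ[R] N) (e : EXT R N L i) :
    pre f e = (Ext.mk₀ (ModuleCat.ofHom f)).comp e (zero_add i) := rfl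

lemma post_apply {i : ℕ} (g : N →ₗ[R] L) (e : EXT R M N i) :
    post g e = e.comp (Ext.mk₀ (ModuleCat.ofHom g)) (add_zero i) := rfl

lemma pre_pre {i : ℕ} (f : A →ₗ[R] B) (g : B →ₗ[R] C) (e : EXT R C L i) :
    pre f (pre g e) = pre (g ∘ₗ f) e :=
  Ext.mk₀_comp_mk₀_assoc _ _ _

lemma post_post {i : ℕ} (f : A →ₗ[R] B) (g : B →ₗ[R] C) (e : EXT R M A i) :
    post g (post f e) = post (g ∘ₗ f) e := by
  rw [post_apply, post_apply, post_apply, Ext.comp_assoc_of_third_deg_zero, Ext.mk₀_comp_mk₀]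
  rfl

lemma pre_post {i : ℕ} (f : A →ₗ[R] B) (g : M →ₗ[R] N) (e : EXT R B M i) :
    pre f (post g e) = post g (pre f e) := by
  rw [post_apply, post_apply, pre_apply, pre_apply, Ext.comp_assoc_of_third_deg_zero]

@[simp] lemma pre_id {i : ℕ} (e : EXT R B M i) : pre LinearMap.id e = e := Ext.mk₀_id_comp e

@[simp] lemma post_id {i : ℕ} (e : EXT R B M i) : post LinearMap.id e = e := Ext.comp_mk₀_id e

@[simp] lemma pre_zero {i : ℕ} (e : EXT R B M i) : pre (0 : A →ₗ[R] B) e = 0 := by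
  have : ModuleCat.ofHom (0 : A →ₗ[R] B) = 0 := rfl
  rw [pre_apply, this, Ext.mk₀_zero, Ext.zero_comp]

@[simp] lemma post_zero {i : ℕ} (e : EXT R B M i) : post (0 : M →ₗ[R] N) e = 0 := by
  have : ModuleCat.ofHom (0 : M →ₗ[R] N) = 0 := rfl
  rw [post_apply, this, Ext.mk₀_zero, Ext.comp_zero]

lemma pre_smul_id {i : ℕ} (r : R) (e : EXT R B M i) :
    pre (r • LinearMap.id : B →ₗ[R] B) e = r • e := by
  have : ModuleCat.ofHom (r • LinearMap.id : B →ₗ[R] B) = r • 𝟙 (ModuleCat.of R B) := rfl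
  rw [pre_apply, this, Ext.mk₀_smul, Ext.smul_comp, Ext.mk₀_id_comp]

lemma post_smul_id {i : ℕ} (r : R) (e : EXT R B M i) :
    post (r • LinearMap.id : M →ₗ[R] M) e = r • e := by
  have : ModuleCat.ofHom (r • LinearMap.id : M →ₗ[R] M) = r • 𝟙 (ModuleCat.of R M) := rfl
  rw [post_apply, this, Ext.smul_eq_comp_mk₀]

/-- Linear maps, as elements of `Ext^0`. -/
noncomputable def ext0 (f : M →ₗ[R] N) : EXT R M N 0 := Ext.mk₀ (ModuleCat.ofHom f)

lemma ext0_surj (e : EXT R M N 0) : ∃ f : M →ₗ[R] N, ext0 f = e :=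
  ⟨(Ext.homEquiv₀ e).hom, Ext.mk₀_homEquiv₀_apply e⟩

lemma ext0_eq_zero {f : M →ₗ[R] N} : ext0 f = 0 ↔ f = 0 := by
  refine (Ext.mk₀_eq_zero_iff _).trans ⟨fun h => ?_, fun h => by rw [h]; rfl⟩
  exact congrArg ModuleCat.Hom.hom h

lemma ext0_inj {f g : M →ₗ[R] N} : ext0 f = ext0 g ↔ f = g := by
  refine ⟨fun h => ?_, fun h => by rw [h]⟩
  have := (Ext.mk₀_bijective _ _).1 h
  exact congrArg ModuleCat.Hom.hom this

lemma pre_ext0 (f : A →ₗ[R] B) (g : B →ₗ[R] C) : pre f (ext0 g) = ext0 (g ∘ₗ f) :=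
  Ext.mk₀_comp_mk₀ _ _

lemma post_ext0 (f : A →ₗ[R] B) (g : B →ₗ[R] C) : post g (ext0 f) = ext0 (g ∘ₗ f) :=
  Ext.mk₀_comp_mk₀ _ _

lemma smul_ext0 (r : R) (f : A →ₗ[R] B) : r • ext0 f = ext0 (r • f) :=
  (Ext.mk₀_smul _ _).symm

/-- Short exact sequences of modules, unbundled. -/
structure SES (f : A →ₗ[R] B) (g : B →ₗ[R] C) : Prop where
  inj : Function.Injective f
  surj : Function.Surjective g
  exact : Function.Exact f g

variable {f : A →ₗ[R] B} {g : B →ₗ[R] C}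

lemma SES.comp_eq_zero (h : SES f g) : g ∘ₗ f = 0 := h.exact.linearMap_comp_eq_zero

/-- The short complex attached to a short exact sequence. -/
abbrev SES.sc (h : SES f g) : ShortComplex (ModuleCat.{u} R) :=
  ShortComplex.mk (ModuleCat.ofHom f) (ModuleCat.ofHom g) (by
    rw [← ModuleCat.ofHom_comp, h.comp_eq_zero]; rfl)

lemma SES.shortExact (h : SES f g) : h.sc.ShortExact where
  exact := (ShortComplex.ShortExact.moduleCat_exact_iff_function_exact _).mpr h.exact
  mono_f := (ModuleCat.mono_iff_injective _).2 h.inj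
  epi_g := (ModuleCat.epi_iff_surjective _).2 h.surj

/-- The covariant connecting homomorphism. -/
noncomputable def SES.dcov (h : SES f g) {i : ℕ} : EXT R M C i →ₗ[R] EXT R M A (i + 1) where
  toFun e := e.comp h.shortExact.extClass rfl
  map_add' _ _ := Ext.add_comp _ _ _ _
  map_smul' _ _ := Ext.smul_comp _ _ _ _

/-- The contravariant connecting homomorphism. -/
noncomputable def SES.dcon (h : SES f g) {i : ℕ} : EXT R A N i →ₗ[R] EXT R C N (i + 1) where
  toFun e := h.shortExact.extClass.comp e (add_comm 1 i)
  map_add' _ _ := Ext.comp_add _ _ _ _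
  map_smul' _ _ := Ext.comp_smul _ _ _ _

lemma SES.dcov_apply (h : SES f g) {i : ℕ} (e : EXT R M C i) :
    h.dcov e = e.comp h.shortExact.extClass rfl := rfl

lemma SES.dcon_apply (h : SES f g) {i : ℕ} (e : EXT R A N i) :
    h.dcon e = h.shortExact.extClass.comp e (add_comm 1 i) := rfl

lemma SES.pre_dcov (h : SES f g) {i : ℕ} (k : M →ₗ[R] N) (e : EXT R N C i) :
    pre k (h.dcov e) = h.dcov (pre k e) := by
  rw [pre_apply, pre_apply, h.dcov_apply, h.dcov_apply, Ext.comp_assoc]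
  omega

lemma SES.post_dcon (h : SES f g) {i : ℕ} (k : M →ₗ[R] N) (e : EXT R A M i) :
    post k (h.dcon e) = h.dcon (post k e) := by
  rw [post_apply, post_apply, h.dcon_apply, h.dcon_apply, Ext.comp_assoc]
  omega

lemma SES.post_dcov (h : SES f g) {i : ℕ} (e : EXT R M C i) : post f (h.dcov e) = 0 := by
  rw [post_apply, h.dcov_apply, Ext.comp_assoc_of_third_deg_zero]
  have := h.shortExact.extClass_comp
  exact (congrArg (fun t => e.comp t rfl) this).trans (Ext.comp_zero _ _ _ _ _)

lemma SES.pre_dcon (h : SES f g) {i : ℕ} (e : EXT R A N i) : pre g (h.dcon e) = 0 := by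
  rw [pre_apply, h.dcon_apply]
  exact h.shortExact.comp_extClass_assoc e _

lemma SES.dcov_post (h : SES f g) {i : ℕ} (e : EXT R M B i) : h.dcov (post g e) = 0 := by
  rw [post_apply, h.dcov_apply, Ext.comp_assoc_of_second_deg_zero]
  have := h.shortExact.comp_extClass
  exact (congrArg (fun t => e.comp t rfl) this).trans (Ext.comp_zero _ _ _ _ _)

lemma SES.dcon_pre (h : SES f g) {i : ℕ} (e : EXT R B N i) : h.dcon (pre f e) = 0 := by
  rw [pre_apply, h.dcon_apply]
  exact h.shortExact.extClass_comp_assoc e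

lemma SES.cov₁ (h : SES f g) {i : ℕ} {e : EXT R M A (i + 1)} (he : post f e = 0) :
    ∃ x : EXT R M C i, h.dcov x = e :=
  Ext.covariant_sequence_exact₁ _ h.shortExact e he rfl

lemma SES.cov₂ (h : SES f g) {i : ℕ} {e : EXT R M B i} (he : post g e = 0) :
    ∃ x : EXT R M A i, post f x = e :=
  Ext.covariant_sequence_exact₂ _ h.shortExact e he

lemma SES.cov₃ (h : SES f g) {i : ℕ} {e : EXT R M C i} (he : h.dcov e = 0) :
    ∃ x : EXT R M B i, post g x = e :=
  Ext.covariant_sequence_exact₃ _ h.shortExact e rfl he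

lemma SES.con₁ (h : SES f g) {i : ℕ} {e : EXT R A N i} (he : h.dcon e = 0) :
    ∃ x : EXT R B N i, pre f x = e :=
  Ext.contravariant_sequence_exact₁ h.shortExact _ e (add_comm 1 i) he

lemma SES.con₂ (h : SES f g) {i : ℕ} {e : EXT R B N i} (he : pre f e = 0) :
    ∃ x : EXT R C N i, pre g x = e :=
  Ext.contravariant_sequence_exact₂ h.shortExact _ e he

lemma SES.con₃ (h : SES f g) {i : ℕ} {e : EXT R C N (i + 1)} (he : pre g e = 0) :
    ∃ x : EXT R A N i, h.dcon x = e :=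
  Ext.contravariant_sequence_exact₃ h.shortExact _ e he (add_comm 1 i)

lemma ext_injective [Module.Injective R N] {i : ℕ} (e : EXT R M N (i + 1)) : e = 0 :=
  have := Module.injective_object_of_injective_module R N
  Ext.eq_zero_of_injective e

lemma ses_mkQ (N : Submodule R M) : SES N.subtype N.mkQ :=
  ⟨N.injective_subtype, N.mkQ_surjective, LinearMap.exact_subtype_mkQ N⟩

lemma ses_of_inj (f : A →ₗ[R] B) (hf : Function.Injective f) : SES f f.range.mkQ :=
  ⟨hf, Submodule.mkQ_surjective _, LinearMap.exact_map_mkQ_range f⟩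

variable (R M) in
lemma exists_injective : ∃ (J : ModuleCat.{u} R) (_ : Module.Injective R J) (f : M →ₗ[R] J),
    Function.Injective f := by
  obtain ⟨⟨J, hJ, f, hf⟩⟩ := EnoughInjectives.presentation (ModuleCat.of R M)
  exact ⟨J, Module.injective_module_of_injective_object R J, f.hom,
    (ModuleCat.mono_iff_injective _).1 hf⟩

instance ext_finite [IsNoetherianRing R] [Module.Finite R M] [Module.Finite R N] (i : ℕ) :
    Module.Finite R (EXT R M N i) := inferInstance

end Ext

/-- The projection `R/I^t' → R/I^t` for `t ≤ t'`. -/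
abbrev qp (I : Ideal R) {t t' : ℕ} (h : t ≤ t') : (R ⧸ I ^ t') →ₗ[R] (R ⧸ I ^ t) :=
  Submodule.mapQ (I ^ t') (I ^ t) LinearMap.id (Ideal.pow_le_pow_right h)

/-- `VAN I i M` expresses `colim_t Ext^i(R/I^t, M) = 0`: every class dies at a later stage. -/
def VAN (I : Ideal R) (i : ℕ) (M : Type u) [AddCommGroup M] [Module R M] : Prop :=
  ∀ (t : ℕ) (e : EXT R (R ⧸ I ^ t) M i), ∃ (t' : ℕ) (h : t ≤ t'), pre (qp I h) e = 0

/-- The local cohomology module is a filtered colimit over the powers of `I`, so a class of it comes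
from some `Ext^{n+1}(R/I^t, M)` and vanishes once that class dies at a later stage. -/
lemma subsingleton_localCohomology {I : Ideal R} {n : ℕ} {M : ModuleCat.{u} R}
    (h : VAN I (n+1) M) : Subsingleton ((localCohomology I (n+1)).obj M) := by
  let D := localCohomology.diagram (localCohomology.idealPowersDiagram I) (n+1)
  have : HasColimit D := inferInstance
  let c := colimit.cocone D
  let hc : IsColimit (((evaluation _ _).obj M).mapCocone c) :=
    isColimitOfPreserves _ (colimit.isColimit D)
  refine ⟨fun a b => ?_⟩
  have main : ∀ a : ((localCohomology I (n+1)).obj M : Type u), a = 0 := by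
    intro a
    have : PreservesFilteredColimitsOfSize.{0, 0} (forget (ModuleCat.{u} R)) :=
      preservesFilteredColimitsOfSize_shrink.{0, u, 0, u} _
    obtain ⟨j, x, rfl⟩ := Concrete.isColimit_exists_rep _ hc a
    obtain ⟨e, he⟩ := old_ext_class (X := ModuleCat.of R (R ⧸ I ^ j.unop.unop)) n x
    obtain ⟨t', ht, h0⟩ := h _ e
    have := he _ _ h0
    let g : j ⟶ op (op t') := (homOfLE ht).op.op
    have w := (((evaluation _ _).obj M).mapCocone c).w g
    rw [← w]
    change (((evaluation _ _).obj M).mapCocone c).ι.app (op (op t')) (((D ⋙ (evaluation _ _).obj M).map g) x) = 0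
    have h5 : ((D ⋙ (evaluation _ _).obj M).map g) x = 0 := this
    rw [h5, map_zero]
  rw [main a, main b]

/-! ### Torsion and Grothendieck vanishing -/

section Gamma
variable {M N : Type u} [AddCommGroup M] [Module R M] [AddCommGroup N] [Module R N]

variable (M) in
/-- `Γ_I(M)`, the submodule of elements killed by a power of `I`. -/
def gam (I : Ideal R) : Submodule R M where
  carrier := {x | ∃ n : ℕ, ∀ r ∈ I ^ n, r • x = 0}
  zero_mem' := ⟨0, by simp⟩
  add_mem' := by
    rintro a b ⟨n, hn⟩ ⟨m, hm⟩
    refine ⟨n + m, fun r hr => ?_⟩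
    rw [smul_add, hn r (Ideal.pow_le_pow_right (by omega) hr),
      hm r (Ideal.pow_le_pow_right (by omega) hr), add_zero]
  smul_mem' := by
    rintro c x ⟨n, hn⟩
    exact ⟨n, fun r hr => by rw [smul_comm, hn r hr, smul_zero]⟩

lemma mem_gam {I : Ideal R} {x : M} : x ∈ gam M I ↔ ∃ n : ℕ, ∀ r ∈ I ^ n, r • x = 0 := Iff.rfl

lemma map_mem_gam {I : Ideal R} (f : M →ₗ[R] N) {x : M} (hx : x ∈ gam M I) : f x ∈ gam N I := by
  obtain ⟨n, hn⟩ := hx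
  exact ⟨n, fun r hr => by rw [← map_smul, hn r hr, map_zero]⟩

lemma mem_gam_of_inj {I : Ideal R} (f : M →ₗ[R] N) (hf : Function.Injective f) {x : M}
    (hx : f x ∈ gam N I) : x ∈ gam M I := by
  obtain ⟨n, hn⟩ := hx
  exact ⟨n, fun r hr => hf (by rw [map_smul, hn r hr, map_zero])⟩

lemma gam_gam (I : Ideal R) : gam (gam M I) I = ⊤ :=
  eq_top_iff.2 fun x _ => mem_gam_of_inj (gam M I).subtype (Subtype.val_injective) x.2

lemma gam_of_surj {I : Ideal R} (f : M →ₗ[R] N) (hf : Function.Surjective f) (h : gam M I = ⊤) :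
    gam N I = ⊤ := by
  refine eq_top_iff.2 fun y _ => ?_
  obtain ⟨x, rfl⟩ := hf y
  exact map_mem_gam f (h ▸ trivial)

/-- A finitely generated submodule of the torsion part is killed by a single power of `I`. -/
lemma fg_le_gam {I : Ideal R} (P : Submodule R M) (hP : P.FG) (h : P ≤ gam M I) :
    ∃ k : ℕ, ∀ r ∈ I ^ k, ∀ x ∈ P, r • x = 0 := by
  revert h
  refine Submodule.fg_induction (motive := fun P _ => P ≤ gam M I →
    ∃ k : ℕ, ∀ r ∈ I ^ k, ∀ x ∈ P, r • x = 0) (fun x h => ?_)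
    (fun P Q hP hQ ihP ihQ h => ?_) P hP
  · obtain ⟨n, hn⟩ := h (Submodule.mem_span_singleton_self x)
    refine ⟨n, fun r hr y hy => ?_⟩
    obtain ⟨c, rfl⟩ := Submodule.mem_span_singleton.1 hy
    rw [smul_comm, hn r hr, smul_zero]
  · obtain ⟨n, hn⟩ := ihP (le_sup_left.trans h)
    obtain ⟨m, hm⟩ := ihQ (le_sup_right.trans h)
    refine ⟨n + m, fun r hr y hy => ?_⟩
    obtain ⟨a, ha, b, hb, rfl⟩ := Submodule.mem_sup.1 hy
    rw [smul_add, hn r (Ideal.pow_le_pow_right (by omega) hr) _ ha,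
      hm r (Ideal.pow_le_pow_right (by omega) hr) _ hb, add_zero]

lemma gam_quot [IsNoetherianRing R] (I : Ideal R) : gam (M ⧸ gam M I) I = ⊥ := by
  refine eq_bot_iff.2 fun y hy => ?_
  obtain ⟨x, rfl⟩ := Submodule.mkQ_surjective _ y
  obtain ⟨n, hn⟩ := hy
  let P : Submodule R M := Submodule.map (LinearMap.toSpanSingleton R M x) (I ^ n)
  have hP : P.FG := Submodule.FG.map _ (IsNoetherian.noetherian (I ^ n))
  obtain ⟨k, hk⟩ := fg_le_gam (I := I) P hP (by
    rintro _ ⟨r, hr, rfl⟩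
    exact (Submodule.Quotient.mk_eq_zero _).1 (hn r hr))
  rw [Submodule.mem_bot, Submodule.mkQ_apply, Submodule.Quotient.mk_eq_zero]
  refine ⟨k + n, fun r hr => ?_⟩
  rw [pow_add] at hr
  refine Submodule.mul_induction_on hr (fun a ha b hb => ?_) (fun a b ha hb => ?_)
  · rw [mul_smul]
    exact hk a ha _ ⟨b, hb, rfl⟩
  · rw [add_smul, ha, hb, add_zero]

/-- Over a noetherian ring, the torsion part of an injective module is injective. -/
lemma gam_injective [IsNoetherianRing R] (I : Ideal R) [Module.Injective R M] :
    Module.Injective R (gam M I) := by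
  refine Module.Baer.injective fun a g => ?_
  obtain ⟨n, hn⟩ := fg_le_gam (I := I) g.range
    (by rw [LinearMap.range_eq_map]; exact Submodule.FG.map _ (Module.Finite.fg_top))
    (by rw [gam_gam]; exact le_top)
  -- By Artin–Rees, `g` factors through `a / (a ∩ I^(n + k))`, which embeds in `R / I^(n + k)`.
  obtain ⟨k, hk⟩ := Ideal.exists_pow_inf_eq_pow_smul I (a : Submodule R R)
  have hker : ∀ r : a, (r : R) ∈ I ^ (n + k) → g r = 0 := by
    intro r hr
    have h1 : (r : R) ∈ I ^ (n + k) • (⊤ : Submodule R R) ⊓ a := ⟨by simpa using hr, r.2⟩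
    rw [hk _ (by omega), Nat.add_sub_cancel] at h1
    have h2 : (r : R) ∈ Submodule.map (Submodule.subtype a) (I ^ n • (⊤ : Submodule R a)) := by
      rw [Submodule.map_smul'', Submodule.map_top, Submodule.range_subtype]
      exact Submodule.smul_mono le_rfl inf_le_right h1
    obtain ⟨r', hr', h3⟩ := h2
    have : r' = r := Subtype.ext h3
    subst this
    refine Submodule.smul_induction_on hr' (fun s hs b _ => ?_) (fun x y hx hy => ?_)
    · rw [map_smul]; exact hn s hs _ ⟨b, rfl⟩
    · rw [map_add, hx, hy, add_zero]
  let p : Submodule R a := Submodule.comap (Submodule.subtype a) (I ^ (n + k))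
  let f : (a ⧸ p) →ₗ[R] (R ⧸ I ^ (n + k)) := Submodule.mapQ p (I ^ (n + k)) (Submodule.subtype a) le_rfl
  have hf : Function.Injective f := by
    rw [← LinearMap.ker_eq_bot, Submodule.ker_mapQ]
    exact Submodule.mkQ_map_self _
  let g' : (a ⧸ p) →ₗ[R] M := p.liftQ ((gam M I).subtype ∘ₗ g) (by
    intro r hr
    have := hker r hr
    simp [this])
  obtain ⟨h, hh⟩ := Module.Injective.out f hf g'
  refine ⟨LinearMap.toSpanSingleton R _ ⟨h (Submodule.Quotient.mk 1), n + k, fun r hr => ?_⟩,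
    fun x hx => ?_⟩
  · rw [← map_smul, ← Submodule.Quotient.mk_smul, smul_eq_mul, mul_one,
      (Submodule.Quotient.mk_eq_zero _).2 hr, map_zero]
  · apply Subtype.ext
    have := hh (Submodule.Quotient.mk ⟨x, hx⟩)
    change x • h (Submodule.Quotient.mk 1) = g ⟨x, hx⟩
    rw [← map_smul, ← Submodule.Quotient.mk_smul, smul_eq_mul, mul_one]
    exact this

/-- A finitely generated module without `I`-torsion has a regular element in `I`, by prime
avoidance over the associated primes. -/
lemma exists_regular [IsNoetherianRing R] [Module.Finite R M] {I : Ideal R} (h : gam M I = ⊥) :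
    ∃ x ∈ I, IsSMulRegular M x := by
  by_contra! hc
  have hsub : (I : Set R) ⊆ ⋃ p ∈ associatedPrimes R M, (p : Set R) := by
    rw [biUnion_associatedPrimes_eq_compl_regular]
    exact fun x hx => hc x hx
  obtain ⟨p, hp, hle⟩ := (Ideal.subset_union_prime_finite (associatedPrimes.finite R M) ⊤ ⊤
    (fun i hi _ _ => hi.isPrime)).1 hsub
  obtain ⟨hpp, f, hf⟩ := (isAssociatedPrime_iff_exists_injective_linearMap p M).1 hp
  have h1 : f (Submodule.Quotient.mk 1) ∈ gam M I := by
    refine ⟨1, fun r hr => ?_⟩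
    rw [pow_one] at hr
    rw [← map_smul, ← Submodule.Quotient.mk_smul, smul_eq_mul, mul_one,
      (Submodule.Quotient.mk_eq_zero _).2 (hle hr), map_zero]
  rw [h, Submodule.mem_bot, ← map_zero f] at h1
  have := hf h1
  rw [Submodule.Quotient.mk_eq_zero] at this
  exact hpp.ne_top ((Ideal.eq_top_iff_one _).2 this)

end Gamma

section Van
variable {A B C M : Type u} [AddCommGroup A] [Module R A] [AddCommGroup B] [Module R B]
  [AddCommGroup C] [Module R C] [AddCommGroup M] [Module R M]

lemma qp_qp (I : Ideal R) {s t r : ℕ} (h : s ≤ t) (h' : t ≤ r) :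
    qp I h ∘ₗ qp I h' = qp I (h.trans h') := by
  ext; rfl

lemma VAN.mid {f : A →ₗ[R] B} {g : B →ₗ[R] C} (h : SES f g) {I : Ideal R} {i : ℕ}
    (hA : VAN I i A) (hC : VAN I i C) : VAN I i B := by
  intro t e
  obtain ⟨t', ht, h1⟩ := hC t (post g e)
  rw [pre_post] at h1
  obtain ⟨x, hx⟩ := h.cov₂ h1
  obtain ⟨t'', ht', h2⟩ := hA t' x
  refine ⟨t'', ht.trans ht', ?_⟩
  rw [← qp_qp I ht ht', ← pre_pre, ← hx, pre_post, h2, map_zero]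

/-- Torsion modules have no higher local cohomology: they embed in torsion injectives, with torsion
cokernel. -/
lemma VAN.of_torsion [IsNoetherianRing R] {I : Ideal R} (hM : gam M I = ⊤) (n : ℕ) :
    VAN I (n + 1) M := by
  induction n generalizing M with
  | zero =>
    obtain ⟨J, hJ, f, hf⟩ := exists_injective R M
    have hG := gam_injective (M := J) I
    let j : M →ₗ[R] gam J I := f.codRestrict _ fun x => map_mem_gam f (hM ▸ trivial)
    have S := ses_of_inj j (fun a b hab => hf (congrArg Subtype.val hab))
    intro t e
    obtain ⟨x, rfl⟩ := S.cov₁ (ext_injective (post j e))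
    obtain ⟨φ, rfl⟩ := ext0_surj x
    obtain ⟨c, hc⟩ := S.surj (φ (Submodule.Quotient.mk 1))
    obtain ⟨n, hn⟩ : c ∈ gam (gam J I) I := by rw [gam_gam]; trivial
    let ψ : (R ⧸ I ^ (n + t)) →ₗ[R] gam J I :=
      Submodule.liftQ _ (LinearMap.toSpanSingleton R _ c) fun r hr =>
        hn r (Ideal.pow_le_pow_right (by omega) hr)
    have hψ : (j.range.mkQ) ∘ₗ ψ = φ ∘ₗ qp I (Nat.le_add_left t n) := by
      ext
      change j.range.mkQ ((1 : R) • c) = φ (Submodule.Quotient.mk 1)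
      rw [one_smul, hc]
    refine ⟨n + t, Nat.le_add_left t n, ?_⟩
    rw [S.pre_dcov, pre_ext0, ← hψ, ← post_ext0, S.dcov_post]
  | succ n ih =>
    obtain ⟨J, hJ, f, hf⟩ := exists_injective R M
    have hG := gam_injective (M := J) I
    let j : M →ₗ[R] gam J I := f.codRestrict _ fun x => map_mem_gam f (hM ▸ trivial)
    have S := ses_of_inj j (fun a b hab => hf (congrArg Subtype.val hab))
    intro t e
    obtain ⟨x, rfl⟩ := S.cov₁ (ext_injective (post j e))
    obtain ⟨t', ht, h1⟩ := ih (gam_of_surj _ S.surj (gam_gam I)) t x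
    exact ⟨t', ht, by rw [S.pre_dcov, h1, map_zero]⟩

lemma ses_smul {x : R} (hx : IsSMulRegular M x) :
    SES (x • LinearMap.id : M →ₗ[R] M) (x • (⊤ : Submodule R M)).mkQ := by
  refine ⟨hx, Submodule.mkQ_surjective _, ?_⟩
  rw [LinearMap.exact_iff, Submodule.ker_mkQ]
  ext y
  simp only [Submodule.mem_smul_pointwise_iff_exists, LinearMap.mem_range, LinearMap.smul_apply,
    LinearMap.id_apply, Submodule.mem_top, true_and]

lemma smul_ext_eq_zero {a : R} (h : ∀ x : A, a • x = 0) {i : ℕ} (e : EXT R A M i) :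
    a • e = 0 := by
  have : (a • LinearMap.id : A →ₗ[R] A) = 0 := by ext x; exact h x
  rw [← pre_smul_id, this, pre_zero]

/-- Grothendieck's vanishing theorem: `H^i_I(M) = 0` for `i > dim M`. -/
lemma VAN.of_dim [IsNoetherianRing R] [IsLocalRing R] {I : Ideal R} (hI : I ≤ maximalIdeal R)
    [Module.Finite R M] {i : ℕ} (hM : Module.supportDim R M < i) : VAN I i M := by
  induction i generalizing M with
  | zero =>
    have : Module.supportDim R M = ⊥ := by
      generalize Module.supportDim R M = x at hM
      induction x with
      | bot => rfl
      | coe x => exact absurd hM (by simp)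
    have := (Module.supportDim_eq_bot_iff_subsingleton R M).1 this
    intro t e
    obtain ⟨φ, rfl⟩ := ext0_surj e
    exact ⟨t, le_rfl, by rw [show φ = 0 from LinearMap.ext fun _ => Subsingleton.elim _ _,
      ext0_eq_zero.2 rfl, map_zero]⟩
  | succ n ih =>
    refine VAN.mid (ses_mkQ (gam M I)) (VAN.of_torsion (gam_gam I) n) ?_
    obtain ⟨x, hxI, hx⟩ := exists_regular (gam_quot (M := M) I)
    have hd := Module.supportDim_quotSMulTop_succ_eq_supportDim hx (hI hxI)
    have hd' := Module.supportDim_le_of_surjective _ (gam M I).mkQ_surjective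
    have hlt : Module.supportDim R (QuotSMulTop x (M ⧸ gam M I)) < n := by
      have h3 := (hd.trans_le hd').trans_lt hM
      generalize Module.supportDim R (QuotSMulTop x (M ⧸ gam M I)) = z at h3
      push_cast at h3
      exact lt_of_add_lt_add_right h3
    have hV := ih hlt
    have S := ses_smul hx
    -- Multiplication by `x` is injective on the colimit, whereas every class is killed by a power
    -- of `x`.
    have key : ∀ (k t : ℕ) (e : EXT R (R ⧸ I ^ t) (M ⧸ gam M I) (n + 1)), x ^ k • e = 0 →
        ∃ (t' : ℕ) (h : t ≤ t'), pre (qp I h) e = 0 := by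
      intro k
      induction k with
      | zero => exact fun t e he => ⟨t, le_rfl, by rw [← one_smul R e, ← pow_zero x, he, map_zero]⟩
      | succ k ihk =>
        intro t e he
        have : post (x • LinearMap.id) (x ^ k • e) = 0 := by
          rw [post_smul_id, ← mul_smul, ← pow_succ', he]
        obtain ⟨z, hz⟩ := S.cov₁ this
        obtain ⟨t', ht, h1⟩ := hV t z
        obtain ⟨t'', ht', h2⟩ := ihk t' (pre (qp I ht) e) (by
          rw [← map_smul, ← hz, S.pre_dcov, h1, map_zero])
        exact ⟨t'', ht.trans ht', by rw [← qp_qp I ht ht', ← pre_pre, h2]⟩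
    intro t e
    refine key t t e (smul_ext_eq_zero (fun y => ?_) e)
    obtain ⟨y, rfl⟩ := Submodule.Quotient.mk_surjective _ y
    rw [← Submodule.Quotient.mk_smul, Submodule.Quotient.mk_eq_zero]
    exact Ideal.mul_mem_right _ _ (Ideal.pow_mem_pow hxI t)

end Van

/-! ### The injective hull of the residue field -/

section Hull

/-- Finitely generated modules killed by a power of the maximal ideal are built from copies of the
residue field by extensions. -/
lemma torsion_induction [IsNoetherianRing R] [IsLocalRing R]
    {motive : (N : Type u) → [AddCommGroup N] → [Module R N] → Prop}
    (zero : ∀ (N : Type u) [AddCommGroup N] [Module R N] [Subsingleton N], motive N)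
    (residue : ∀ (N : Type u) [AddCommGroup N] [Module R N] (_ : N ≃ₗ[R] R ⧸ maximalIdeal R),
      motive N)
    (ext : ∀ (A B C : Type u) [AddCommGroup A] [Module R A] [AddCommGroup B] [Module R B]
      [AddCommGroup C] [Module R C] (f : A →ₗ[R] B) (g : B →ₗ[R] C), SES f g →
      motive A → motive C → motive B)
    (M : Type u) [AddCommGroup M] [Module R M] [hfin : Module.Finite R M]
    (hM : gam M (maximalIdeal R) = ⊤) : motive M := by
  revert hM
  refine IsNoetherianRing.induction_on_isQuotientEquivQuotientPrime
    (motive := fun N _ _ _ => gam N (maximalIdeal R) = ⊤ → motive N) R hfin ?_ ?_ ?_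
  · intro N _ _ _ _ _
    exact zero N
  · intro N _ _ _ p e hN
    have h1 : e.symm (Submodule.Quotient.mk 1) ∈ gam N (maximalIdeal R) := hN ▸ trivial
    obtain ⟨n, hn⟩ := h1
    have hle : maximalIdeal R ≤ p.1 := by
      refine p.2.le_of_pow_le (n := n) fun r hr => ?_
      have := hn r hr
      rw [← map_smul, e.symm.map_eq_zero_iff, ← Submodule.Quotient.mk_smul, smul_eq_mul, mul_one,
        Submodule.Quotient.mk_eq_zero] at this
      exact this
    have : p.1 = maximalIdeal R :=
      ((maximalIdeal.isMaximal R).eq_of_le p.2.ne_top hle).symm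
    exact residue N (e.trans (Submodule.quotEquivOfEq _ _ this))
  · intro A _ _ _ B _ _ _ C _ _ _ f g hf hg hfg hA hC hB
    refine ext A B C f g ⟨hf, hg, hfg⟩ (hA ?_) (hC (gam_of_surj g hg hB))
    exact eq_top_iff.2 fun x _ => mem_gam_of_inj f hf (hB ▸ trivial)

lemma injective_of_retract {M N : Type u} [AddCommGroup M] [Module R M] [AddCommGroup N]
    [Module R N] [Module.Injective R N] (i : M →ₗ[R] N) (p : N →ₗ[R] M) (h : ∀ x, p (i x) = x) :
    Module.Injective R M := by
  refine ⟨fun X Y _ _ _ _ f hf g => ?_⟩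
  obtain ⟨k, hk⟩ := Module.Injective.out f hf (i ∘ₗ g)
  exact ⟨p ∘ₗ k, fun x => by simp [hk, h]⟩

variable [IsLocalRing R]

/-- `ι : k → E` exhibits `E` as an injective hull of the residue field `k`: the module `E` is
injective and `k` is essential in `E`. Over a noetherian ring `E` is then automatically torsion, but
it is convenient to record it. -/
structure IsHull {E : Type u} [AddCommGroup E] [Module R E]
    (ι : (R ⧸ maximalIdeal R) →ₗ[R] E) : Prop where
  inj : Module.Injective R E
  ι_inj : Function.Injective ι
  tors : gam E (maximalIdeal R) = ⊤
  ess : ∀ x : E, x ≠ 0 → ∃ r : R, r • x ≠ 0 ∧ r • x ∈ ι.range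

variable (R) in
/-- The injective hull is a maximal essential extension of `k` inside a torsion injective
module containing `k`. -/
lemma exists_hull [IsNoetherianRing R] : ∃ (E : ModuleCat.{u} R)
    (ι : (R ⧸ maximalIdeal R) →ₗ[R] E), IsHull ι := by
  obtain ⟨J₀, hJ₀, f, hf⟩ := exists_injective R (R ⧸ maximalIdeal R)
  let J := gam J₀ (maximalIdeal R)
  have hJ : Module.Injective R J := gam_injective _
  have hJt : gam J (maximalIdeal R) = ⊤ := gam_gam _
  let ι₀ : (R ⧸ maximalIdeal R) →ₗ[R] J := f.codRestrict _ fun x => ⟨1, fun r hr => by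
    obtain ⟨y, rfl⟩ := Submodule.Quotient.mk_surjective _ x
    rw [pow_one] at hr
    rw [← map_smul, ← Submodule.Quotient.mk_smul, smul_eq_mul,
      (Submodule.Quotient.mk_eq_zero _).2 (Ideal.mul_mem_right _ _ hr), map_zero]⟩
  let S : Set (Submodule R J) :=
    {E | ι₀.range ≤ E ∧ ∀ x ∈ E, x ≠ 0 → ∃ r : R, r • x ≠ 0 ∧ r • x ∈ ι₀.range}
  obtain ⟨E, -, hE⟩ := zorn_le_nonempty₀ S (by
    intro c hc hch y hy
    refine ⟨sSup c, ⟨(hc hy).1.trans (le_sSup hy), fun x hx => ?_⟩, fun z hz => le_sSup hz⟩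
    obtain ⟨z, hz, hxz⟩ := (Submodule.mem_sSup_of_directed ⟨y, hy⟩ hch.directedOn).1 hx
    exact (hc hz).2 x hxz) ι₀.range ⟨le_rfl, fun x hx h0 => ⟨1, by simpa, by simpa⟩⟩
  obtain ⟨C, -, hC⟩ := zorn_le_nonempty₀ {C : Submodule R J | Disjoint E C} (by
    intro c hc hch y hy
    exact ⟨sSup c, hch.directedOn.disjoint_sSup_right.2 fun z hz => hc hz, fun z hz => le_sSup hz⟩)
    ⊥ disjoint_bot_right
  have hCd : Disjoint E C := hC.prop
  -- `E` embeds in `J / C`, essentially because `C` is maximal.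
  let φ : E →ₗ[R] J ⧸ C := C.mkQ ∘ₗ E.subtype
  have hφ : Function.Injective φ := by
    rw [injective_iff_map_eq_zero]
    intro x hx
    have : (x : J) ∈ C := (Submodule.Quotient.mk_eq_zero _).1 hx
    exact Subtype.ext (Submodule.disjoint_def.1 hCd x x.2 this)
  have hess : ∀ z : J ⧸ C, z ≠ 0 → ∃ (r : R) (e : E), r • z = φ e ∧ e ≠ 0 := by
    intro z hz
    obtain ⟨y, rfl⟩ := Submodule.Quotient.mk_surjective _ z
    by_contra! hcon
    have hd : Disjoint E (C ⊔ Submodule.span R {y}) := by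
      rw [Submodule.disjoint_def]
      intro e he hy
      obtain ⟨c, hc, w, hw, h⟩ := Submodule.mem_sup.1 hy
      obtain ⟨r, rfl⟩ := Submodule.mem_span_singleton.1 hw
      have := hcon r ⟨e, he⟩ (by
        change r • C.mkQ y = C.mkQ e
        rw [← h, map_add, ← map_smul, Submodule.mkQ_apply C c,
          (Submodule.Quotient.mk_eq_zero C).2 hc, zero_add])
      exact congrArg Subtype.val this
    have h1 := hC.le_of_ge hd le_sup_left
    exact hz ((Submodule.Quotient.mk_eq_zero _).2
      (h1 (le_sup_right (a := C) (Submodule.mem_span_singleton_self y))))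
  obtain ⟨ψ, hψ⟩ := Module.Injective.out φ hφ E.subtype
  have hrange : ψ.range = E := by
    refine (hE.le_of_ge ⟨?_, ?_⟩ ?_).antisymm ?_
    · exact hE.prop.1.trans fun x hx => ⟨φ ⟨x, hx⟩, hψ _⟩
    · rintro _ ⟨z, rfl⟩ hz
      obtain ⟨r, e, h1, h2⟩ := hess z (by rintro rfl; exact hz (map_zero _))
      obtain ⟨s, h3, h4⟩ := hE.prop.2 e e.2 (fun h => h2 (Subtype.ext h))
      refine ⟨s * r, ?_⟩
      rw [mul_smul, ← map_smul, h1, hψ]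
      exact ⟨h3, h4⟩
    · exact fun x hx => ⟨φ ⟨x, hx⟩, hψ _⟩
    · exact fun x hx => ⟨φ ⟨x, hx⟩, hψ _⟩
  have hEinj : Module.Injective R E := by
    refine injective_of_retract E.subtype
      ((ψ ∘ₗ C.mkQ).codRestrict E fun x => hrange ▸ ⟨_, rfl⟩) fun x => Subtype.ext (hψ x)
  refine ⟨ModuleCat.of R E, ι₀.codRestrict E fun x => hE.prop.1 ⟨x, rfl⟩, hEinj,
    fun a b hab => hf (congrArg (fun t : E => (t : J).1) hab), ?_, ?_⟩
  · exact eq_top_iff.2 fun x _ => mem_gam_of_inj E.subtype Subtype.val_injective (hJt ▸ trivial)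
  · rintro ⟨x, hx⟩ h0
    obtain ⟨r, h1, y, h2⟩ := hE.prop.2 x hx (fun h => h0 (Subtype.ext h))
    exact ⟨r, fun h => h1 (congrArg Subtype.val h), y, Subtype.ext h2⟩

/-- A nonzero torsion element has a nonzero multiple in the socle. -/
lemma exists_socle {M : Type u} [AddCommGroup M] [Module R M] {x : M}
    (hx : x ∈ gam M (maximalIdeal R)) (h0 : x ≠ 0) :
    ∃ r : R, r • x ≠ 0 ∧ ∀ s ∈ maximalIdeal R, s • r • x = 0 := by
  classical
  let n := Nat.find hx
  have hn : ∀ r ∈ maximalIdeal R ^ n, r • x = 0 := Nat.find_spec hx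
  cases hn' : n with
  | zero =>
    rw [hn'] at hn
    exact absurd (by simpa using hn 1 (by simp)) h0
  | succ k =>
    have := Nat.find_min hx (m := k) (show k < n by omega)
    push Not at this
    obtain ⟨r, hr, h1⟩ := this
    refine ⟨r, h1, fun s hs => ?_⟩
    rw [← mul_smul]
    exact hn _ (by rw [hn', pow_succ']; exact Ideal.mul_mem_mul hs hr)

variable {E : Type u} [AddCommGroup E] [Module R E] {ι : (R ⧸ maximalIdeal R) →ₗ[R] E}

/-- The socle of the hull is `k`. -/
lemma IsHull.socle (h : IsHull ι) {x : E} (hx : ∀ s ∈ maximalIdeal R, s • x = 0) :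
    ∃ c : R, x = c • ι (Submodule.Quotient.mk 1) := by
  by_cases h0 : x = 0
  · exact ⟨0, by simp [h0]⟩
  obtain ⟨r, h1, y, h2⟩ := h.ess x h0
  have hr : IsUnit r := by
    by_contra hr
    exact h1 (hx r ((mem_maximalIdeal r).2 hr))
  obtain ⟨u, rfl⟩ := hr
  obtain ⟨c, rfl⟩ := Submodule.Quotient.mk_surjective _ y
  refine ⟨↑u⁻¹ * c, ?_⟩
  rw [mul_smul, ← map_smul, ← Submodule.Quotient.mk_smul, smul_eq_mul, mul_one, h2, ← mul_smul,
    Units.inv_mul, one_smul]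

/-- The hull detects nonzero torsion elements. -/
lemma IsHull.cogen (h : IsHull ι) {M : Type u} [AddCommGroup M] [Module R M] {x : M}
    (hx : x ∈ gam M (maximalIdeal R)) (h0 : x ≠ 0) : ∃ f : M →ₗ[R] E, f x ≠ 0 := by
  obtain ⟨r, h1, h2⟩ := exists_socle hx h0
  let j : (R ⧸ maximalIdeal R) →ₗ[R] M :=
    Submodule.liftQ _ (LinearMap.toSpanSingleton R M (r • x)) fun s hs => h2 s hs
  have hj : Function.Injective j := by
    rw [injective_iff_map_eq_zero]
    intro y hy
    obtain ⟨c, rfl⟩ := Submodule.Quotient.mk_surjective _ y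
    rw [Submodule.Quotient.mk_eq_zero]
    by_contra hc
    have hu : IsUnit c := not_not.1 fun hn => hc ((mem_maximalIdeal c).2 hn)
    have hy' : c • (r • x) = 0 := hy
    exact h1 (hu.smul_eq_zero.1 hy')
  obtain ⟨f, hf⟩ := h.inj.out j hj ι
  refine ⟨f, fun hfx => ?_⟩
  have h3 : j (Submodule.Quotient.mk 1) = r • x := one_smul R _
  have := hf (Submodule.Quotient.mk 1)
  rw [h3, map_smul, hfx, smul_zero, ← map_zero ι] at this
  have := h.ι_inj this
  rw [eq_comm, Submodule.Quotient.mk_eq_zero] at this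
  exact (maximalIdeal.isMaximal R).ne_top ((Ideal.eq_top_iff_one _).2 this)

/-- A finitely generated torsion module is reflexive for the duality `Hom(-, E)`; only the
surjectivity of the biduality map is recorded. -/
lemma IsHull.bidual [IsNoetherianRing R] (h : IsHull ι) (M : Type u) [AddCommGroup M] [Module R M]
    [Module.Finite R M] (hM : gam M (maximalIdeal R) = ⊤) (Φ : (M →ₗ[R] E) →ₗ[R] E) :
    ∃ x : M, ∀ f, Φ f = f x := by
  have hE := h.inj
  revert Φ
  refine torsion_induction (motive := fun N _ _ => ∀ Φ : (N →ₗ[R] E) →ₗ[R] E,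
    ∃ x : N, ∀ f, Φ f = f x) ?_ ?_ ?_ M hM
  · intro N _ _ _ Φ
    exact ⟨0, fun f => by rw [show f = 0 from LinearMap.ext fun x => by
      rw [Subsingleton.elim x 0, map_zero, map_zero]]; simp⟩
  · intro N _ _ e Φ
    have hs : ∀ s ∈ maximalIdeal R, ∀ x : N, s • x = 0 := by
      intro s hs x
      apply e.injective
      obtain ⟨c, hc⟩ := Submodule.Quotient.mk_surjective _ (e x)
      rw [map_smul, ← hc, ← Submodule.Quotient.mk_smul, map_zero, Submodule.Quotient.mk_eq_zero]
      exact Ideal.mul_mem_right _ _ hs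
    let x₁ : N := e.symm (Submodule.Quotient.mk 1)
    have hgen : ∀ x : N, ∃ c : R, x = c • x₁ := by
      intro x
      obtain ⟨c, hc⟩ := Submodule.Quotient.mk_surjective _ (e x)
      refine ⟨c, e.injective ?_⟩
      rw [map_smul, e.apply_symm_apply, ← hc, ← Submodule.Quotient.mk_smul, smul_eq_mul, mul_one]
    let i : N →ₗ[R] E := ι ∘ₗ e.toLinearMap
    have hi : i x₁ = ι (Submodule.Quotient.mk 1) := congrArg ι (e.apply_symm_apply _)
    obtain ⟨c, hc⟩ := h.socle (x := Φ i) fun s hs' => by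
      rw [← map_smul, show s • i = 0 from LinearMap.ext fun x => by
        rw [LinearMap.smul_apply, ← map_smul, hs s hs' x, map_zero, LinearMap.zero_apply], map_zero]
    refine ⟨c • x₁, fun f => ?_⟩
    obtain ⟨b, hb⟩ := h.socle (x := f x₁) fun s hs' => by rw [← map_smul, hs s hs', map_zero]
    have hf : f = b • i := by
      ext x
      obtain ⟨a, rfl⟩ := hgen x
      rw [map_smul, hb, LinearMap.smul_apply, map_smul, hi, smul_comm]
    rw [map_smul, hb, hf, map_smul, hc, smul_comm]
  · -- Correct `Φ` by evaluation at `b` so as to make it factor through the dual of `A`.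
    intro A B C _ _ _ _ _ _ f g S hA hC Φ
    obtain ⟨c, hc⟩ := hC (Φ ∘ₗ LinearMap.lcomp R E g)
    obtain ⟨b, rfl⟩ := S.surj c
    let Φ₁ : (B →ₗ[R] E) →ₗ[R] E := Φ - LinearMap.applyₗ b
    let ρ : (B →ₗ[R] E) →ₗ[R] (A →ₗ[R] E) := LinearMap.lcomp R E f
    have hρ : Function.Surjective ρ := by
      intro u
      obtain ⟨v, hv⟩ := Module.Injective.out f S.inj u
      exact ⟨v, LinearMap.ext hv⟩
    have hk : ρ.ker ≤ Φ₁.ker := by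
      intro u hu
      have hu' : ∀ x, u (f x) = 0 := fun x => LinearMap.congr_fun hu x
      have hle : g.ker ≤ u.ker := by
        intro y hy
        obtain ⟨x, rfl⟩ := (S.exact y).1 hy
        exact hu' x
      obtain ⟨v, hv⟩ : ∃ v : C →ₗ[R] E, v ∘ₗ g = u := by
        refine ⟨(g.ker.liftQ u hle) ∘ₗ (g.quotKerEquivOfSurjective S.surj).symm.toLinearMap, ?_⟩
        ext y
        have : (g.quotKerEquivOfSurjective S.surj).symm (g y) = Submodule.Quotient.mk y := by
          rw [LinearEquiv.symm_apply_eq]; rfl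
        simp [this]
      have := hc v
      subst hv
      exact sub_eq_zero.2 this
    obtain ⟨a, ha⟩ := hA ((ρ.ker.liftQ Φ₁ hk) ∘ₗ (ρ.quotKerEquivOfSurjective hρ).symm.toLinearMap)
    refine ⟨b + f a, fun u => ?_⟩
    have h1 : (ρ.quotKerEquivOfSurjective hρ).symm (ρ u) = Submodule.Quotient.mk u := by
      rw [LinearEquiv.symm_apply_eq]; rfl
    have h2 := ha (ρ u)
    rw [LinearMap.comp_apply, LinearEquiv.coe_coe, h1] at h2
    have h3 : Φ u - u b = u (f a) := h2
    rw [map_add, ← h3]; abel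

/-- Over a complete local ring, every endomorphism of the hull is a homothety. -/
lemma IsHull.endo [IsNoetherianRing R] [IsAdicComplete (maximalIdeal R) R] (h : IsHull ι)
    (φ : E →ₗ[R] E) : ∃ r : R, ∀ x, φ x = r • x := by
  have hq : ∀ t : ℕ, gam (R ⧸ maximalIdeal R ^ t) (maximalIdeal R) = ⊤ := fun t =>
    eq_top_iff.2 fun x _ => ⟨t, fun r hr => by
      obtain ⟨y, rfl⟩ := Submodule.Quotient.mk_surjective _ x
      rw [← Submodule.Quotient.mk_smul, Submodule.Quotient.mk_eq_zero]
      exact Ideal.mul_mem_right _ _ hr⟩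
  have H : ∀ t : ℕ, ∃ r : R, ∀ x : E, (∀ s ∈ maximalIdeal R ^ t, s • x = 0) → φ x = r • x := by
    intro t
    obtain ⟨y, hy⟩ := h.bidual (R ⧸ maximalIdeal R ^ t) (hq t)
      (φ ∘ₗ LinearMap.applyₗ (Submodule.Quotient.mk 1))
    obtain ⟨r, rfl⟩ := Submodule.Quotient.mk_surjective _ y
    refine ⟨r, fun x hx => ?_⟩
    have := hy (Submodule.liftQ _ (LinearMap.toSpanSingleton R E x) hx)
    change φ ((1 : R) • x) = r • x at this
    rwa [one_smul] at this
  -- The scalars representing `φ` on the `m^t`-torsion form a Cauchy sequence.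
  choose r hr using H
  obtain ⟨L, hL⟩ := IsPrecomplete.prec (I := maximalIdeal R) (M := R) inferInstance (f := r) (by
    intro m n hmn
    rw [SModEq.sub_mem, smul_eq_mul, Ideal.mul_top]
    by_contra hcon
    obtain ⟨f, hf⟩ := h.cogen (M := R ⧸ maximalIdeal R ^ m)
      (x := Submodule.Quotient.mk (r m - r n)) (hq m ▸ trivial)
      (by rwa [Ne, Submodule.Quotient.mk_eq_zero])
    have hx : ∀ s ∈ maximalIdeal R ^ m, s • f (Submodule.Quotient.mk 1) = 0 := fun s hs => by
      rw [← map_smul, ← Submodule.Quotient.mk_smul, smul_eq_mul, mul_one,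
        (Submodule.Quotient.mk_eq_zero _).2 hs, map_zero]
    refine hf ?_
    rw [← mul_one (r m - r n), ← smul_eq_mul, Submodule.Quotient.mk_smul, map_smul, sub_smul,
      ← hr m _ hx, ← hr n _ fun s hs => hx s (Ideal.pow_le_pow_right hmn hs), sub_self])
  refine ⟨L, fun x => ?_⟩
  obtain ⟨t, ht⟩ : x ∈ gam E (maximalIdeal R) := h.tors ▸ trivial
  rw [hr t x ht]
  have := hL t
  rw [SModEq.sub_mem, smul_eq_mul, Ideal.mul_top] at this
  rw [← sub_eq_zero, ← sub_smul]
  exact ht _ this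

end Hull

/-! ### Quotients of powers of the hull -/

section Approx

/-- A submodule `L` of `R^n` over a domain is, up to a nonzero factor `a`, a direct summand: project
onto the span of `L` over the fraction field and clear denominators. -/
lemma exists_almost_projection [IsDomain R] {n : ℕ} (L : Submodule R (Fin n → R)) :
    ∃ (a : R) (lam : (Fin n → R) →ₗ[R] (Fin n → R)), a ≠ 0 ∧ (∀ v, lam v ∈ L) ∧
      ∀ v ∈ L, lam v = a • v := by
  classical
  let K := FractionRing R
  let im : (Fin n → R) →ₗ[R] (Fin n → K) :=
    LinearMap.pi fun i => Algebra.linearMap R K ∘ₗ LinearMap.proj i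
  have him : ∀ v i, im v i = algebraMap R K (v i) := fun _ _ => rfl
  have hinj : Function.Injective im := fun v w h => funext fun i =>
    IsFractionRing.injective R K (congrFun h i)
  let W : Submodule K (Fin n → K) := Submodule.span K (im '' L)
  obtain ⟨p, hp⟩ := W.subtype.exists_leftInverse_of_injective W.ker_subtype
  -- Every vector of `W` lies in the image of `L` after clearing a denominator.
  have hden : ∀ w ∈ W, ∃ b : R, b ≠ 0 ∧ ∃ l ∈ L, im l = b • w := by
    intro w hw
    induction hw using Submodule.span_induction with
    | mem x hx => obtain ⟨l, hl, rfl⟩ := hx; exact ⟨1, one_ne_zero, l, hl, by simp⟩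
    | zero => exact ⟨1, one_ne_zero, 0, L.zero_mem, by simp⟩
    | add x y _ _ hx hy =>
      obtain ⟨b, hb, l, hl, h⟩ := hx
      obtain ⟨c, hc, m, hm, h'⟩ := hy
      refine ⟨b * c, mul_ne_zero hb hc, c • l + b • m,
        L.add_mem (L.smul_mem _ hl) (L.smul_mem _ hm), ?_⟩
      rw [map_add, map_smul, map_smul, h, h', smul_add, smul_smul, smul_smul, mul_comm c b]
    | smul k x _ hx =>
      obtain ⟨b, hb, l, hl, h⟩ := hx
      obtain ⟨c, d, hd, rfl⟩ := IsFractionRing.div_surjective (A := R) k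
      have hd0 : d ≠ 0 := nonZeroDivisors.ne_zero hd
      have hd1 : algebraMap R K d ≠ 0 := fun h => hd0 (IsFractionRing.injective R K (by rw [h, map_zero]))
      refine ⟨b * d, mul_ne_zero hb hd0, c • l, L.smul_mem _ hl, ?_⟩
      have hk : d • (algebraMap R K c / algebraMap R K d) = algebraMap R K c := by
        rw [Algebra.smul_def, mul_div_cancel₀ _ hd1]
      rw [map_smul, h, mul_smul, ← smul_assoc d, hk, algebraMap_smul, smul_comm]
  have hW : ∀ l ∈ L, im l ∈ W := fun l hl => Submodule.subset_span ⟨l, hl, rfl⟩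
  choose b hb l hl hbl using fun i : Fin n => hden (p (Pi.single i 1)) (p (Pi.single i 1)).2
  let a := ∏ i, b i
  let c : Fin n → R := fun i => ∏ j ∈ Finset.univ.erase i, b j
  have hc : ∀ i, c i * b i = a := fun i => Finset.prod_erase_mul _ _ (Finset.mem_univ i)
  let lam : (Fin n → R) →ₗ[R] (Fin n → R) := Fintype.linearCombination R fun i => c i • l i
  have hlam : ∀ v, lam v = ∑ i, v i • c i • l i := fun v => rfl
  have key : ∀ v, im (lam v) = a • ((p (im v) : W) : Fin n → K) := by
    intro v
    have h1 : im v = ∑ i, (algebraMap R K (v i)) • (Pi.single i 1 : Fin n → K) := by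
      ext j
      simp [him, Finset.sum_apply, Pi.single_apply, Algebra.smul_def]
    rw [hlam, map_sum, h1, map_sum, Submodule.coe_sum, Finset.smul_sum]
    refine Finset.sum_congr rfl fun i _ => ?_
    rw [map_smul, map_smul, hbl, smul_smul (c i), hc, map_smul, Submodule.coe_smul, algebraMap_smul,
      smul_comm]
  refine ⟨a, lam, Finset.prod_ne_zero_iff.2 fun i _ => hb i, fun v => ?_, fun v hv => ?_⟩
  · rw [hlam]
    exact L.sum_mem fun i _ => L.smul_mem _ (L.smul_mem _ (hl i))
  · apply hinj
    rw [key, map_smul]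
    congr 1
    exact congrArg Subtype.val (LinearMap.congr_fun hp ⟨im v, hW v hv⟩)

variable [IsLocalRing R] {E : Type u} [AddCommGroup E] [Module R E]
  {ι : (R ⧸ maximalIdeal R) →ₗ[R] E}

/-- By Matlis duality the previous lemma dualizes: a quotient of `E^n` is a direct summand up to a
nonzero factor. -/
lemma IsHull.exists_almost_section [IsDomain R] [IsNoetherianRing R]
    [IsAdicComplete (maximalIdeal R) R] (h : IsHull ι) {n : ℕ} {Z : Type u} [AddCommGroup Z]
    [Module R Z] (π : (Fin n → E) →ₗ[R] Z) (hπ : Function.Surjective π) :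
    ∃ (a : R) (σ : Z →ₗ[R] (Fin n → E)), a ≠ 0 ∧ ∀ z, π (σ z) = a • z := by
  classical
  let L : Submodule R (Fin n → R) :=
    { carrier := {v | ∀ e ∈ π.ker, ∑ i, v i • e i = 0}
      zero_mem' := fun e _ => by simp
      add_mem' := fun {v w} hv hw e he => by
        simp only [Pi.add_apply, add_smul, Finset.sum_add_distrib, hv e he, hw e he, add_zero]
      smul_mem' := fun r v hv e he => by
        simp only [Pi.smul_apply, smul_assoc, ← Finset.smul_sum, hv e he, smul_zero] }
  have hL : ∀ v, v ∈ L ↔ ∀ e ∈ π.ker, ∑ i, v i • e i = 0 := fun _ => Iff.rfl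
  have hZ : gam Z (maximalIdeal R) = ⊤ := by
    refine gam_of_surj π hπ (eq_top_iff.2 fun e _ => ?_)
    have : e = ∑ i, LinearMap.single R (fun _ => E) i (e i) := by
      ext j; simp [Finset.sum_apply, Pi.single_apply]
    rw [this]
    exact Submodule.sum_mem _ fun i _ => map_mem_gam _ (h.tors ▸ trivial)
  -- `ker π` is the orthogonal of its orthogonal `L`.
  have hrefl : ∀ e : Fin n → E, (∀ v ∈ L, ∑ i, v i • e i = 0) → π e = 0 := by
    intro e he
    by_contra h0
    obtain ⟨f, hf⟩ := h.cogen (x := π e) (hZ ▸ trivial) h0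
    choose v hv using fun i => h.endo (f ∘ₗ π ∘ₗ LinearMap.single R (fun _ => E) i)
    have hsum : ∀ e' : Fin n → E, f (π e') = ∑ i, v i • e' i := by
      intro e'
      have : e' = ∑ i, LinearMap.single R (fun _ => E) i (e' i) := by
        ext j; simp [Finset.sum_apply, Pi.single_apply]
      conv_lhs => rw [this, map_sum, map_sum]
      exact Finset.sum_congr rfl fun i _ => hv i (e' i)
    refine hf ?_
    rw [hsum]
    refine he v ((hL v).2 fun e' he' => ?_)
    rw [← hsum, LinearMap.mem_ker.1 he', map_zero]
  obtain ⟨a, lam, ha, hmem, hid⟩ := exists_almost_projection L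
  -- The transpose of `lam`, acting on `E^n`.
  let σ' : (Fin n → E) →ₗ[R] (Fin n → E) :=
    LinearMap.pi fun i => ∑ j, lam (Pi.single i 1) j • LinearMap.proj j
  have hσ' : ∀ e i, σ' e i = ∑ j, lam (Pi.single i 1) j • e j := by
    intro e i
    simp [σ', LinearMap.sum_apply]
  have hker : π.ker ≤ σ'.ker := by
    intro e he
    rw [LinearMap.mem_ker]
    ext i
    rw [hσ']
    exact (hL _).1 (hmem _) e he
  have hcomp : ∀ e, π (σ' e) = a • π e := by
    intro e
    rw [← sub_eq_zero, ← map_smul, ← map_sub]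
    refine hrefl _ fun v hv => ?_
    have h1 : ∑ i, v i • σ' e i = ∑ j, lam v j • e j := by
      have hv' : v = ∑ i, v i • (Pi.single i 1 : Fin n → R) := by
        ext j; simp [Finset.sum_apply, Pi.single_apply]
      conv_rhs => rw [hv', map_sum]
      simp only [hσ', Finset.smul_sum, map_smul, Finset.sum_apply, Finset.sum_smul, Pi.smul_apply,
        smul_assoc]
      exact Finset.sum_comm
    simp only [Pi.sub_apply, smul_sub, Finset.sum_sub_distrib, h1, hid v hv, Pi.smul_apply,
      smul_assoc]
    rw [sub_eq_zero]
    exact Finset.sum_congr rfl fun i _ => smul_comm _ _ _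
  refine ⟨a, (π.ker.liftQ σ' hker) ∘ₗ (π.quotKerEquivOfSurjective hπ).symm.toLinearMap, ha,
    fun z => ?_⟩
  obtain ⟨e, rfl⟩ := hπ z
  have : (π.quotKerEquivOfSurjective hπ).symm (π e) = Submodule.Quotient.mk e := by
    rw [LinearEquiv.symm_apply_eq]; rfl
  rw [LinearMap.comp_apply, LinearEquiv.coe_coe, this]
  exact hcomp e

end Approx

/-! ### Annihilators of extensions of torsion modules -/

section Annihilate

lemma injective_prod (M N : Type u) [AddCommGroup M] [Module R M] [AddCommGroup N] [Module R N]
    [Module.Injective R M] [Module.Injective R N] : Module.Injective R (M × N) := by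
  refine ⟨fun X Y _ _ _ _ f hf g => ?_⟩
  obtain ⟨k, hk⟩ := Module.Injective.out f hf (LinearMap.fst R M N ∘ₗ g)
  obtain ⟨l, hl⟩ := Module.Injective.out f hf (LinearMap.snd R M N ∘ₗ g)
  exact ⟨k.prod l, fun x => Prod.ext (hk x) (hl x)⟩

lemma injective_pow (n : ℕ) (E : Type u) [AddCommGroup E] [Module R E]
    [Module.Injective R E] : Module.Injective R (Fin n → E) := by
  refine ⟨fun X Y _ _ _ _ f hf g => ?_⟩
  choose k hk using fun i => Module.Injective.out f hf (LinearMap.proj i ∘ₗ g)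
  exact ⟨LinearMap.pi k, fun x => funext fun i => hk i x⟩

/-- The identification `Hom(M, N) = Ext^0(M, N)`. -/
noncomputable def ext0L (M N : Type u) [AddCommGroup M] [Module R M] [AddCommGroup N] [Module R N] :
    (M →ₗ[R] N) →ₗ[R] EXT R M N 0 where
  toFun := ext0
  map_add' _ _ := Ext.mk₀_add _ _
  map_smul' r f := (smul_ext0 r f).symm

variable [IsLocalRing R] {E : Type u} [AddCommGroup E] [Module R E]
  {ι : (R ⧸ maximalIdeal R) →ₗ[R] E}

/-- A finitely generated torsion module embeds in a finite power of the hull. -/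
lemma IsHull.embed_finite [IsNoetherianRing R] (h : IsHull ι) (M : Type u) [AddCommGroup M]
    [Module R M] [Module.Finite R M] (hM : gam M (maximalIdeal R) = ⊤) :
    ∃ (n : ℕ) (f : M →ₗ[R] (Fin n → E)), Function.Injective f := by
  have hE := h.inj
  refine torsion_induction (motive := fun N _ _ => ∃ (n : ℕ) (f : N →ₗ[R] (Fin n → E)),
    Function.Injective f) ?_ ?_ ?_ M hM
  · intro N _ _ _
    exact ⟨0, 0, Function.injective_of_subsingleton _⟩
  · intro N _ _ e
    refine ⟨1, LinearMap.pi fun _ => ι ∘ₗ e.toLinearMap, fun x y hxy => ?_⟩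
    exact e.injective (h.ι_inj (congrFun hxy 0))
  · intro A B C _ _ _ _ _ _ f g S ⟨n, φ, hφ⟩ ⟨m, ψ, hψ⟩
    have := injective_pow (R := R) n E
    obtain ⟨χ, hχ⟩ := Module.Injective.out f S.inj φ
    refine ⟨n + m, LinearMap.pi (Fin.append (fun i => LinearMap.proj i ∘ₗ χ)
      (fun i => LinearMap.proj i ∘ₗ ψ ∘ₗ g)), ?_⟩
    rw [injective_iff_map_eq_zero]
    intro b hb
    have h1 : ψ (g b) = 0 := by
      ext i
      have := congrFun hb (Fin.natAdd n i)
      simpa using this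
    have h2 : χ b = 0 := by
      ext i
      have := congrFun hb (Fin.castAdd m i)
      simpa using this
    obtain ⟨a, rfl⟩ := (S.exact b).1 (hψ (h1.trans (map_zero ψ).symm))
    rw [hχ] at h2
    rw [hφ (h2.trans (map_zero φ).symm), map_zero]

/-- A module whose socle `Hom(k, M)` is finitely generated embeds in the product of a finite power
of `E` and an injective module without torsion: the socle embeds in a power of `E`, and `M` modulo
its torsion embeds in a torsion-free injective. -/
lemma IsHull.embed [IsNoetherianRing R] (h : IsHull ι) (M : Type u) [AddCommGroup M]
    [Module R M] [Module.Finite R (EXT R (R ⧸ maximalIdeal R) M 0)] :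
    ∃ (n : ℕ) (J : ModuleCat.{u} R) (_ : Module.Injective R J) (_ : gam J (maximalIdeal R) = ⊥)
      (f : M →ₗ[R] (Fin n → E) × J), Function.Injective f := by
  have hE := h.inj
  let P : Submodule R M :=
    { carrier := {x | ∀ s ∈ maximalIdeal R, s • x = 0}
      zero_mem' := fun s _ => smul_zero s
      add_mem' := fun {x y} hx hy s hs => by rw [smul_add, hx s hs, hy s hs, add_zero]
      smul_mem' := fun r x hx s hs => by rw [smul_comm, hx s hs, smul_zero] }
  have hP : Module.Finite R P := by
    let u : P →ₗ[R] EXT R (R ⧸ maximalIdeal R) M 0 :=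
      { toFun := fun x => ext0L _ _ (Submodule.liftQ _ (LinearMap.toSpanSingleton R M x) x.2)
        map_add' := fun x y => by
          rw [← map_add]
          refine congrArg _ (Submodule.linearMap_qext _ (LinearMap.ext_ring ?_))
          exact smul_add (1 : R) (x : M) y
        map_smul' := fun r x => by
          rw [← map_smul]
          refine congrArg _ (Submodule.linearMap_qext _ (LinearMap.ext_ring ?_))
          exact smul_comm (1 : R) r (x : M) }
    refine Module.Finite.of_injective u ?_
    rw [injective_iff_map_eq_zero]
    intro x hx
    have h1 : _ = (0 : _ →ₗ[R] M) := ext0_eq_zero.1 hx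
    have h2 := LinearMap.congr_fun h1 (Submodule.Quotient.mk 1)
    change (1 : R) • (x : M) = 0 at h2
    rw [one_smul] at h2
    exact Subtype.ext h2
  obtain ⟨n, φ, hφ⟩ := h.embed_finite P (eq_top_iff.2 fun x _ => ⟨1, fun r hr =>
    Subtype.ext (x.2 r (by rwa [pow_one] at hr))⟩)
  have := injective_pow (R := R) n E
  obtain ⟨χ, hχ⟩ := Module.Injective.out P.subtype P.injective_subtype φ
  obtain ⟨J₀, hJ₀, j, hj⟩ := exists_injective R (M ⧸ gam M (maximalIdeal R))
  have hG : Module.Injective R (gam J₀ (maximalIdeal R)) := gam_injective _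
  -- The torsion part of `J₀` is injective, so its complement `ker ρ` is injective and torsion-free.
  obtain ⟨ρ, hρ⟩ := Module.Injective.out (gam J₀ (maximalIdeal R)).subtype
    (Submodule.injective_subtype _) LinearMap.id
  have hρ' : ∀ x (hx : x ∈ gam J₀ (maximalIdeal R)), ρ x = ⟨x, hx⟩ := fun x hx => hρ ⟨x, hx⟩
  let p : J₀ →ₗ[R] ρ.ker :=
    (LinearMap.id - (gam J₀ (maximalIdeal R)).subtype ∘ₗ ρ).codRestrict _ fun x => by
      have := hρ (ρ x)
      simp only [Submodule.subtype_apply, LinearMap.id_apply] at this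
      simp [this]
  have hp : ∀ x, ((p x : ρ.ker) : J₀) = x - ρ x := fun _ => rfl
  have hinj : Module.Injective R ρ.ker := injective_of_retract ρ.ker.subtype p fun x => by
    apply Subtype.ext
    rw [hp, Submodule.subtype_apply, LinearMap.mem_ker.1 x.2]
    simp
  refine ⟨n, ModuleCat.of R ρ.ker, hinj, ?_, χ.prod (p ∘ₗ j ∘ₗ Submodule.mkQ _), ?_⟩
  · refine eq_bot_iff.2 fun x hx => ?_
    have h1 : (x : J₀) ∈ gam J₀ (maximalIdeal R) := map_mem_gam ρ.ker.subtype hx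
    have h2 := hρ' _ h1
    rw [LinearMap.mem_ker.1 x.2] at h2
    exact Subtype.ext (congrArg Subtype.val h2).symm
  · rw [injective_iff_map_eq_zero]
    intro x hx
    have h1 : χ x = 0 := congrArg Prod.fst hx
    have h2 : p (j (Submodule.Quotient.mk x)) = 0 := congrArg Prod.snd hx
    have h3 : j (Submodule.Quotient.mk x) ∈ gam J₀ (maximalIdeal R) := by
      have := hp (j (Submodule.Quotient.mk x))
      rw [h2, eq_comm, Submodule.coe_zero, sub_eq_zero] at this
      rw [this]
      exact (ρ _).2
    have h4 := mem_gam_of_inj j hj h3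
    rw [gam_quot, Submodule.mem_bot, Submodule.Quotient.mk_eq_zero] at h4
    by_contra h0
    obtain ⟨r, h5, h6⟩ := exists_socle h4 h0
    have h7 := hχ ⟨r • x, h6⟩
    rw [Submodule.subtype_apply, map_smul, h1, smul_zero, ← map_zero φ] at h7
    exact h5 (congrArg Subtype.val (hφ h7)).symm

/-- The degree one case of `IsHull.annihilate`, which the others are shifted to. With `C = (E^n × J)/M`, the
hypothesis makes the torsion part of `C` a quotient of `E^n`, hence a summand of it up to a nonzero
factor `a`; so `a` times a map from a torsion module to `C` lifts to `E^n`. -/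
lemma IsHull.annihilate_one [IsDomain R] [IsNoetherianRing R] [IsAdicComplete (maximalIdeal R) R]
    (h : IsHull ι) {M J : Type u} [AddCommGroup M] [Module R M] [AddCommGroup J] [Module R J]
    [Module.Injective R J] (hJ : gam J (maximalIdeal R) = ⊥) {n : ℕ}
    (f : M →ₗ[R] (Fin n → E) × J) (hf : Function.Injective f) (hV : VAN (maximalIdeal R) 1 M) :
    ∃ a : R, a ≠ 0 ∧ ∀ (T : Type u) [AddCommGroup T] [Module R T],
      gam T (maximalIdeal R) = ⊤ → ∀ e : EXT R T M 1, a • e = 0 := by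
  have hE := h.inj
  have := injective_pow (R := R) n E
  have := injective_prod (R := R) (Fin n → E) J
  have S := ses_of_inj f hf
  have htors : ∀ e : Fin n → E, e ∈ gam (Fin n → E) (maximalIdeal R) := fun e => by
    classical
    have : e = ∑ i, LinearMap.single R (fun _ => E) i (e i) := by
      ext j; simp [Finset.sum_apply, Pi.single_apply]
    rw [this]
    exact Submodule.sum_mem _ fun i _ => map_mem_gam _ (h.tors ▸ trivial)
  let Z := gam (((Fin n → E) × J) ⧸ f.range) (maximalIdeal R)
  let π : (Fin n → E) →ₗ[R] Z :=
    (f.range.mkQ ∘ₗ LinearMap.inl R _ _).codRestrict _ fun e => map_mem_gam _ (htors e)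
  -- A torsion element of `C` gives a class in `Ext^1(R/m^t, M)`; as that class dies at a later stage,
  -- the element lifts to a torsion element of `E^n × J`, that is, to `E^n`.
  have hπ : Function.Surjective π := by
    rintro ⟨z, t, ht⟩
    let φ : (R ⧸ maximalIdeal R ^ t) →ₗ[R] _ :=
      Submodule.liftQ _ (LinearMap.toSpanSingleton R _ z) ht
    obtain ⟨t', htt, h1⟩ := hV t (S.dcov (ext0 φ))
    rw [S.pre_dcov, pre_ext0] at h1
    obtain ⟨x, hx⟩ := S.cov₃ h1
    obtain ⟨ψ, rfl⟩ := ext0_surj x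
    rw [post_ext0, ext0_inj] at hx
    have h2 := LinearMap.congr_fun hx (Submodule.Quotient.mk 1)
    have h3 : f.range.mkQ (ψ (Submodule.Quotient.mk 1)) = z := h2.trans (one_smul R z)
    have h4 : (ψ (Submodule.Quotient.mk 1)).2 ∈ gam J (maximalIdeal R) :=
      ⟨t', fun r hr => by
        rw [← Prod.smul_snd, ← map_smul, ← Submodule.Quotient.mk_smul, smul_eq_mul, mul_one,
          (Submodule.Quotient.mk_eq_zero _).2 hr, map_zero, Prod.snd_zero]⟩
    rw [hJ, Submodule.mem_bot] at h4
    refine ⟨(ψ (Submodule.Quotient.mk 1)).1, Subtype.ext ?_⟩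
    refine Eq.trans ?_ h3
    exact congrArg f.range.mkQ (Prod.ext rfl h4.symm)
  obtain ⟨a, σ, ha, hσ⟩ := h.exists_almost_section π hπ
  refine ⟨a, ha, fun T _ _ hT e => ?_⟩
  obtain ⟨x, rfl⟩ := S.cov₁ (ext_injective (post f e))
  obtain ⟨g, rfl⟩ := ext0_surj x
  let g' : T →ₗ[R] Z := g.codRestrict _ fun y => map_mem_gam g (hT ▸ trivial)
  have : a • g = f.range.mkQ ∘ₗ (LinearMap.inl R _ J ∘ₗ σ ∘ₗ g') := by
    ext y
    exact (congrArg Subtype.val (hσ (g' y))).symm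
  rw [← map_smul, smul_ext0, this, ← post_ext0, S.dcov_post]

/-- The Bass numbers of `E^n × J` are finite when `J` is an injective module without torsion. -/
lemma IsHull.finite_ext [IsNoetherianRing R] (h : IsHull ι) (J : Type u) [AddCommGroup J]
    [Module R J] [Module.Injective R J] (hJ : gam J (maximalIdeal R) = ⊥) (n i : ℕ) :
    Module.Finite R (EXT R (R ⧸ maximalIdeal R) ((Fin n → E) × J) i) := by
  have hE := h.inj
  have := injective_pow (R := R) n E
  have := injective_prod (R := R) (Fin n → E) J
  cases i with
  | succ i =>
    have : Subsingleton (EXT R (R ⧸ maximalIdeal R) ((Fin n → E) × J) (i + 1)) :=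
      ⟨fun a b => by rw [ext_injective a, ext_injective b]⟩
    infer_instance
  | zero =>
    let w : (Fin n → R) →ₗ[R] ((R ⧸ maximalIdeal R) →ₗ[R] (Fin n → E) × J) :=
      { toFun := fun c => LinearMap.inl R _ J ∘ₗ LinearMap.pi fun i => c i • ι
        map_add' := fun c d => by
          refine LinearMap.ext fun x => Prod.ext (funext fun i => ?_) ?_
          · simp [add_smul]
          · simp
        map_smul' := fun r c => by
          refine LinearMap.ext fun x => Prod.ext (funext fun i => ?_) ?_
          · simp [mul_smul]
          · simp }
    refine Module.Finite.of_surjective (ext0L _ _ ∘ₗ w) fun e => ?_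
    obtain ⟨φ, rfl⟩ := ext0_surj e
    have hk : ∀ s ∈ maximalIdeal R, s • φ (Submodule.Quotient.mk 1) = 0 := fun s hs => by
      rw [← map_smul, ← Submodule.Quotient.mk_smul, smul_eq_mul, mul_one,
        (Submodule.Quotient.mk_eq_zero _).2 hs, map_zero]
    choose c hc using fun i => h.socle (x := (φ (Submodule.Quotient.mk 1)).1 i) fun s hs =>
      congrFun (congrArg Prod.fst (hk s hs)) i
    have h2 : (φ (Submodule.Quotient.mk 1)).2 ∈ gam J (maximalIdeal R) :=
      ⟨1, fun s hs => congrArg Prod.snd (hk s (by rwa [pow_one] at hs))⟩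
    rw [hJ, Submodule.mem_bot] at h2
    refine ⟨c, congrArg ext0 ?_⟩
    refine Submodule.linearMap_qext _ (LinearMap.ext_ring ?_)
    refine Prod.ext (funext fun i => (hc i).symm) h2.symm

/-- If the Bass numbers of `M` are finite and `H^{i+1}_m(M) = 0`, a single nonzero element kills
`Ext^{i+1}(T, M)` for all torsion modules `T`. -/
lemma IsHull.annihilate [IsDomain R] [IsNoetherianRing R] [IsAdicComplete (maximalIdeal R) R]
    (h : IsHull ι) (i : ℕ) (M : Type u) [AddCommGroup M] [Module R M]
    (hfin : ∀ j, Module.Finite R (EXT R (R ⧸ maximalIdeal R) M j))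
    (hV : VAN (maximalIdeal R) (i + 1) M) :
    ∃ a : R, a ≠ 0 ∧ ∀ (T : Type u) [AddCommGroup T] [Module R T],
      gam T (maximalIdeal R) = ⊤ → ∀ e : EXT R T M (i + 1), a • e = 0 := by
  have hE := h.inj
  induction i generalizing M with
  | zero =>
    obtain ⟨n, J, hJ, hJ0, f, hf⟩ := h.embed M
    exact h.annihilate_one hJ0 f hf hV
  | succ i ih =>
    obtain ⟨n, J, hJ, hJ0, f, hf⟩ := h.embed M
    have := injective_pow (R := R) n E
    have := injective_prod (R := R) (Fin n → E) J
    have S := ses_of_inj f hf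
    obtain ⟨a, ha, H⟩ := ih (((Fin n → E) × J) ⧸ f.range) (fun j => by
      have := h.finite_ext J hJ0 n j
      have := hfin (j + 1)
      have hD : (LinearMap.ker (S.dcov (M := R ⧸ maximalIdeal R) (i := j))).FG := by
        refine Submodule.FG.of_le
          (Submodule.FG.map (post (M := R ⧸ maximalIdeal R) (i := j) f.range.mkQ) Module.Finite.fg_top)
          fun e he => ?_
        obtain ⟨x, hx⟩ := S.cov₃ he
        exact ⟨x, trivial, hx⟩
      refine ⟨Submodule.fg_of_fg_map_of_fg_inf_ker (S.dcov (M := R ⧸ maximalIdeal R) (i := j))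
        (IsNoetherian.noetherian _) ?_⟩
      rwa [top_inf_eq]) (fun t e => by
      obtain ⟨t', ht, h1⟩ := hV t (S.dcov e)
      rw [S.pre_dcov] at h1
      obtain ⟨x, hx⟩ := S.cov₃ h1
      exact ⟨t', ht, by rw [← hx, ext_injective x, map_zero]⟩)
    refine ⟨a, ha, fun T _ _ hT e => ?_⟩
    obtain ⟨x, rfl⟩ := S.cov₁ (ext_injective (post f e))
    rw [← map_smul, H T hT x, map_zero]

end Annihilate

/-! ### Annihilators of extensions of finitely generated modules -/

section Uniform
variable [IsNoetherianRing R] [IsLocalRing R]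

/-- Uniform annihilation in degree `j + 1` and dimension `< s` passes to degree `j` and dimension
`< s + 1` for modules of positive depth: dividing by powers of a regular element `x` shows that
`a • e` is divisible by all powers of `x`. -/
lemma annihilate_of_depth_pos {a : R} {s j : ℕ} {M : Type u} [AddCommGroup M] [Module R M]
    [Module.Finite R M]
    (H : ∀ (T : Type u) [AddCommGroup T] [Module R T] [Module.Finite R T],
      Module.supportDim R T < s → ∀ e : EXT R T M (j + 1), a • e = 0)
    (T : Type u) [AddCommGroup T] [Module R T] [Module.Finite R T]
    (hT : gam T (maximalIdeal R) = ⊥) (hs : Module.supportDim R T < s + 1)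
    (e : EXT R T M j) : a • e = 0 := by
  obtain ⟨x, hxm, hx⟩ := exists_regular hT
  have hmem : ∀ n : ℕ, ∃ z : EXT R T M j, a • e = x ^ (n + 1) • z := by
    intro n
    have hxn : IsSMulRegular T (x ^ (n + 1)) := hx.pow (n + 1)
    have hd := Module.supportDim_quotSMulTop_succ_eq_supportDim hxn
      (Ideal.pow_mem_of_mem _ hxm (n + 1) (Nat.succ_pos n))
    rw [← hd] at hs
    have S := ses_smul hxn
    have h1 := H (QuotSMulTop (x ^ (n + 1)) T) (lt_of_add_lt_add_right hs) (S.dcon e)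
    rw [← map_smul] at h1
    obtain ⟨z, hz⟩ := S.con₁ h1
    exact ⟨z, by rw [← hz, pre_smul_id]⟩
  have hinf := Ideal.iInf_pow_smul_eq_bot_of_isLocalRing (M := EXT R T M j) (maximalIdeal R)
    (maximalIdeal.isMaximal R).ne_top
  rw [← Submodule.mem_bot R, ← hinf, Submodule.mem_iInf]
  intro n
  obtain ⟨z, hz⟩ := hmem n
  rw [hz]
  exact Submodule.smul_mem_smul (Ideal.pow_le_pow_right (Nat.le_succ n)
    (Ideal.pow_mem_pow hxm (n + 1))) trivial

variable [IsDomain R] [IsAdicComplete (maximalIdeal R) R]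

/-- Above the dimension of `R`, the modules `Ext^j(T, R)` for `T` finitely generated of bounded
dimension have a common nonzero annihilator. The torsion part of `T` is handled by
`IsHull.annihilate`, and the quotient by `annihilate_of_depth_pos` and induction on the bound. -/
lemma annihilate_above {d : ℕ} (hd : ringKrullDim R = d) (s j : ℕ) (hj : d ≤ j) :
    ∃ a : R, a ≠ 0 ∧ ∀ (T : Type u) [AddCommGroup T] [Module R T] [Module.Finite R T],
      Module.supportDim R T < s → ∀ e : EXT R T R (j + 1), a • e = 0 := by
  induction s generalizing j with
  | zero =>
    refine ⟨1, one_ne_zero, fun T _ _ _ hT e => ?_⟩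
    have : Subsingleton T := by
      rw [← Module.supportDim_eq_bot_iff_subsingleton R]
      generalize Module.supportDim R T = x at hT
      induction x with
      | bot => rfl
      | coe x => exact absurd hT (by simp)
    rw [← pre_smul_id, show (1 : R) • LinearMap.id = (0 : T →ₗ[R] T) from
      LinearMap.ext fun _ => Subsingleton.elim _ _, pre_zero]
  | succ s ih =>
    obtain ⟨E, ι, hι⟩ := exists_hull R
    obtain ⟨a, ha, h1⟩ := hι.annihilate j R (fun _ => inferInstance)
      (VAN.of_dim le_rfl (by
        rw [Module.supportDim_self_eq_ringKrullDim, hd]; exact_mod_cast Nat.lt_succ_of_le hj))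
    obtain ⟨b, hb, h2⟩ := ih (j + 1) (hj.trans (Nat.le_succ j))
    refine ⟨b * a, mul_ne_zero hb ha, fun T _ _ _ hT e => ?_⟩
    have S := ses_mkQ (gam T (maximalIdeal R))
    have h3 := h1 _ (gam_gam (M := T) (maximalIdeal R)) (pre (gam T (maximalIdeal R)).subtype e)
    rw [← map_smul] at h3
    obtain ⟨z, hz⟩ := S.con₂ h3
    have h4 := annihilate_of_depth_pos h2 (T ⧸ gam T (maximalIdeal R)) (gam_quot _)
      ((Module.supportDim_le_of_surjective _ (Submodule.mkQ_surjective _)).trans_lt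
        (by exact_mod_cast hT)) z
    rw [mul_smul, ← hz, ← map_smul, h4, map_zero]

/-- In degree `d = dim R` a common nonzero annihilator of `Ext^d(T, R)` still exists when `T` ranges
over the finitely generated modules of positive depth. -/
lemma annihilate_top {d : ℕ} (hd : ringKrullDim R = d) :
    ∃ a : R, a ≠ 0 ∧ ∀ (T : Type u) [AddCommGroup T] [Module R T] [Module.Finite R T],
      gam T (maximalIdeal R) = ⊥ → ∀ e : EXT R T R d, a • e = 0 := by
  obtain ⟨a, ha, H⟩ := annihilate_above hd d d le_rfl
  refine ⟨a, ha, fun T _ _ _ hT e => annihilate_of_depth_pos H T hT ?_ e⟩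
  refine (Module.supportDim_le_ringKrullDim R T).trans_lt ?_
  rw [hd]
  exact_mod_cast Nat.lt_succ_self d

end Uniform

/-! ### Saturated powers and Chevalley's theorem -/

section Chevalley
variable [IsLocalRing R]

/-- The saturation `I^t : m^∞` of the power `I^t` with respect to the maximal ideal. -/
def sat (I : Ideal R) (t : ℕ) : Ideal R :=
  Submodule.comap (Submodule.mkQ (I ^ t)) (gam (R ⧸ I ^ t) (maximalIdeal R))

lemma mem_sat {I : Ideal R} {t : ℕ} {x : R} :
    x ∈ sat I t ↔ ∃ n : ℕ, ∀ s ∈ maximalIdeal R ^ n, s * x ∈ I ^ t := by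
  refine exists_congr fun n => forall₂_congr fun s _ => ?_
  rw [← map_smul, Submodule.mkQ_apply, Submodule.Quotient.mk_eq_zero, smul_eq_mul]

lemma sat_anti (I : Ideal R) : Antitone (sat I) := by
  intro s t hst x hx
  obtain ⟨n, hn⟩ := mem_sat.1 hx
  exact mem_sat.2 ⟨n, fun r hr => Ideal.pow_le_pow_right hst (hn r hr)⟩

lemma le_sat (I : Ideal R) (t : ℕ) : I ^ t ≤ sat I t := fun _ hx =>
  mem_sat.2 ⟨0, fun s _ => Ideal.mul_mem_left _ s hx⟩

variable [IsNoetherianRing R]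

lemma gam_sat (I : Ideal R) (t : ℕ) : gam (R ⧸ sat I t) (maximalIdeal R) = ⊥ := by
  let f : (R ⧸ sat I t) →ₗ[R] (R ⧸ I ^ t) ⧸ gam (R ⧸ I ^ t) (maximalIdeal R) :=
    Submodule.mapQ _ _ (Submodule.mkQ (I ^ t)) le_rfl
  have hf : Function.Injective f := by
    refine LinearMap.ker_eq_bot.1 ?_
    exact (Submodule.ker_mapQ _ _ _ _).trans (Submodule.mkQ_map_self _)
  refine eq_bot_iff.2 fun x hx => ?_
  have := map_mem_gam f hx
  rw [gam_quot, Submodule.mem_bot, ← map_zero f] at this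
  exact hf this

lemma exists_pow_mul_sat_le (I : Ideal R) (t : ℕ) :
    ∃ n : ℕ, maximalIdeal R ^ n * sat I t ≤ I ^ t := by
  obtain ⟨n, hn⟩ := fg_le_gam (gam (R ⧸ I ^ t) (maximalIdeal R)) (IsNoetherian.noetherian _) le_rfl
  refine ⟨n, Ideal.mul_le.2 fun r hr s hs => ?_⟩
  have := hn r hr _ hs
  rwa [← map_smul, Submodule.mkQ_apply, Submodule.Quotient.mk_eq_zero, smul_eq_mul] at this

/-- If `V(I)` contains a non-closed point `p`, the saturated powers of `I` have zero intersection: an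
element of `m` outside `p` becomes invertible in the localization at `p`, where Krull's theorem
applies. -/
lemma iInf_sat [IsDomain R] {I p : Ideal R} [hp : p.IsPrime] (hI : I ≤ p)
    (hpm : p ≠ maximalIdeal R) {x : R} (hx : ∀ t, x ∈ sat I t) : x = 0 := by
  obtain ⟨s, hsm, hsp⟩ := SetLike.exists_of_lt (lt_of_le_of_ne (le_maximalIdeal hp.ne_top) hpm)
  let S := Localization.AtPrime p
  have hinj : Function.Injective (algebraMap R S) :=
    IsLocalization.injective S p.primeCompl_le_nonZeroDivisors
  apply hinj
  rw [map_zero]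
  have hn : IsNoetherianRing S := IsLocalization.isNoetherianRing p.primeCompl S inferInstance
  have hinf := Ideal.iInf_pow_eq_bot_of_isLocalRing (maximalIdeal S)
    (maximalIdeal.isMaximal S).ne_top
  rw [← Ideal.mem_bot, ← hinf, Ideal.mem_iInf]
  intro t
  obtain ⟨n, hn⟩ := mem_sat.1 (hx t)
  have h1 := Ideal.mem_map_of_mem (algebraMap R S) (hn (s ^ n) (Ideal.pow_mem_pow hsm n))
  have h2 : (I ^ t).map (algebraMap R S) ≤ maximalIdeal S ^ t := by
    rw [Ideal.map_pow]
    refine Ideal.pow_right_mono ((Ideal.map_mono hI).trans ?_) t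
    rw [Localization.AtPrime.map_eq_maximalIdeal]
  have hu : IsUnit (algebraMap R S (s ^ n)) :=
    IsLocalization.map_units S (⟨s ^ n, fun h => hsp (hp.mem_of_pow_mem n h)⟩ : p.primeCompl)
  have h3 := h2 h1
  rw [map_mul] at h3
  exact (Ideal.unit_mul_mem_iff_mem _ hu).1 h3

lemma isArtinian_of_torsion (M : Type u) [AddCommGroup M] [Module R M] [Module.Finite R M]
    (hM : gam M (maximalIdeal R) = ⊤) : IsArtinian R M := by
  refine torsion_induction (motive := fun N _ _ => IsArtinian R N) ?_ ?_ ?_ M hM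
  · intro N _ _ _
    infer_instance
  · intro N _ _ e
    have : IsSimpleModule R N :=
      isSimpleModule_iff_quot_maximal.2 ⟨_, maximalIdeal.isMaximal R, ⟨e⟩⟩
    infer_instance
  · intro A B C _ _ _ _ _ _ f g S hA hC
    exact isArtinian_of_range_eq_ker f g (LinearMap.exact_iff.1 S.exact).symm

/-- Ideals of a noetherian local ring are closed in the maximal-adic topology. -/
lemma mem_of_forall_mem_sup (J : Ideal R) {x : R} (hx : ∀ k : ℕ, x ∈ J ⊔ maximalIdeal R ^ k) :
    x ∈ J := by
  have hinf := Ideal.iInf_pow_smul_eq_bot_of_isLocalRing (M := R ⧸ J) (maximalIdeal R)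
    (maximalIdeal.isMaximal R).ne_top
  rw [← Submodule.Quotient.mk_eq_zero J, ← Submodule.mem_bot R, ← hinf, Submodule.mem_iInf]
  intro k
  obtain ⟨j, hj, y, hy, rfl⟩ := Submodule.mem_sup.1 (hx k)
  rw [Submodule.Quotient.mk_add, (Submodule.Quotient.mk_eq_zero J).2 hj, zero_add, ← mul_one y,
    ← smul_eq_mul, Submodule.Quotient.mk_smul]
  exact Submodule.smul_mem_smul hy trivial

/-- Chevalley's theorem: in a complete local ring, a decreasing sequence of ideals with zero
intersection is cofinal with the powers of the maximal ideal. -/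
lemma chevalley [IsAdicComplete (maximalIdeal R) R] {J : ℕ → Ideal R} (hJ : Antitone J)
    (h0 : ∀ x, (∀ t, x ∈ J t) → x = 0) (c : ℕ) : ∃ t, J t ≤ maximalIdeal R ^ c := by
  have hstab : ∀ k : ℕ, ∃ t, ∀ t' ≥ t, J t ⊔ maximalIdeal R ^ k ≤ J t' ⊔ maximalIdeal R ^ k := by
    intro k
    have : IsArtinian R (R ⧸ maximalIdeal R ^ k) := isArtinian_of_torsion _
      (eq_top_iff.2 fun x _ => ⟨k, fun r hr => by
        obtain ⟨y, rfl⟩ := Submodule.Quotient.mk_surjective _ x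
        rw [← Submodule.Quotient.mk_smul, Submodule.Quotient.mk_eq_zero]
        exact Ideal.mul_mem_right _ _ hr⟩)
    obtain ⟨t, ht⟩ := IsArtinian.monotone_stabilizes
      (⟨fun t => OrderDual.toDual (Submodule.map (Submodule.mkQ (maximalIdeal R ^ k)) (J t)),
        fun s t hst => OrderDual.toDual_le_toDual.2 (Submodule.map_mono (hJ hst))⟩ :
        ℕ →o (Submodule R (R ⧸ maximalIdeal R ^ k))ᵒᵈ)
    refine ⟨t, fun t' ht' => ?_⟩
    have h1 : Submodule.map (Submodule.mkQ (maximalIdeal R ^ k)) (J t) =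
      Submodule.map (Submodule.mkQ (maximalIdeal R ^ k)) (J t') := ht t' ht'
    have h2 := congrArg (Submodule.comap (Submodule.mkQ (maximalIdeal R ^ k))) h1
    rw [Submodule.comap_map_mkQ, Submodule.comap_map_mkQ] at h2
    rw [sup_comm, h2, sup_comm]
  choose τ hτ using hstab
  by_contra! hcon
  -- `V k` is the stable value of `J t + m^k`; elements of `V k` lift to `V (k + 1)` modulo `m^k`.
  let V : ℕ → Ideal R := fun k => J (τ k) ⊔ maximalIdeal R ^ k
  have hV : ∀ k t, V k ≤ J t ⊔ maximalIdeal R ^ k := fun k t =>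
    (hτ k (max t (τ k)) (le_max_right _ _)).trans (sup_le_sup_right (hJ (le_max_left _ _)) _)
  have hlift : ∀ k (x : V k), ∃ y : V (k + 1), (x : R) - y ∈ maximalIdeal R ^ k := by
    rintro k ⟨x, hx⟩
    obtain ⟨j, hj, z, hz, rfl⟩ := Submodule.mem_sup.1 (hV k (τ (k + 1)) hx)
    exact ⟨⟨j, (le_sup_left : _ ≤ V (k + 1)) hj⟩, by simpa using hz⟩
  choose nx hnx using hlift
  obtain ⟨x₀, hx₀, hx₀c⟩ := SetLike.not_le_iff_exists.1 (hcon (τ c))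
  let w : (i : ℕ) → V (c + i) := fun i =>
    Nat.rec (motive := fun i => V (c + i)) ⟨x₀, (le_sup_left : _ ≤ V c) hx₀⟩
      (fun i x => nx (c + i) x) i
  have hw : ∀ i, (w i : R) - w (i + 1) ∈ maximalIdeal R ^ (c + i) := fun i => hnx (c + i) (w i)
  have hwm : ∀ i n, i ≤ n → (w i : R) - w n ∈ maximalIdeal R ^ (c + i) := by
    intro i n hin
    induction n, hin using Nat.le_induction with
    | base => simp
    | succ n hin ih =>
      have := Ideal.pow_le_pow_right (show c + i ≤ c + n by omega) (hw n)
      simpa using add_mem ih this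
  obtain ⟨L, hL⟩ := IsPrecomplete.prec (I := maximalIdeal R) (M := R) inferInstance
    (f := fun i => (w i : R)) (by
      intro i n hin
      rw [SModEq.sub_mem, smul_eq_mul, Ideal.mul_top]
      exact Ideal.pow_le_pow_right (Nat.le_add_left i c) (hwm i n hin))
  have hL' : ∀ i, (w i : R) - L ∈ maximalIdeal R ^ i := fun i => by
    have := hL i
    rwa [SModEq.sub_mem, smul_eq_mul, Ideal.mul_top] at this
  have hL0 : L = 0 := by
    refine h0 L fun t => mem_of_forall_mem_sup _ fun k => ?_
    have hs : J t ⊔ maximalIdeal R ^ (c + k) ≤ J t ⊔ maximalIdeal R ^ k :=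
      sup_le_sup_left (Ideal.pow_le_pow_right (Nat.le_add_left k c)) _
    have h1 : (w k : R) ∈ J t ⊔ maximalIdeal R ^ k := hs (hV (c + k) t (w k).2)
    have := sub_mem h1 ((le_sup_right : _ ≤ J t ⊔ maximalIdeal R ^ k) (hL' k))
    simpa using this
  have h1 : (w c : R) ∈ maximalIdeal R ^ c := by simpa [hL0] using hL' c
  have h2 : x₀ - (w c : R) ∈ maximalIdeal R ^ c :=
    hwm 0 c (Nat.zero_le c)
  exact hx₀c (by simpa using add_mem h2 h1)

/-- When the saturated powers of `I` have zero intersection, they are cofinal with the powers of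
`I`: combine Chevalley's theorem with Artin–Rees, as some `m^n` moves the saturation of `I^t` into
`I^t`. -/
lemma exists_sat_le [IsAdicComplete (maximalIdeal R) R] {I : Ideal R}
    (h0 : ∀ x, (∀ t, x ∈ sat I t) → x = 0) (t : ℕ) : ∃ t' ≥ t, sat I t' ≤ I ^ t := by
  obtain ⟨n, hn⟩ := exists_pow_mul_sat_le I t
  obtain ⟨k, hk⟩ := Ideal.exists_pow_inf_eq_pow_smul (maximalIdeal R) (sat I t : Submodule R R)
  obtain ⟨s, hs⟩ := chevalley (sat_anti I) h0 (n + k)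
  refine ⟨max s t, le_max_right _ _, fun x hx => hn ?_⟩
  have h1 : x ∈ maximalIdeal R ^ (n + k) • (⊤ : Submodule R R) ⊓ sat I t :=
    ⟨by simpa using hs (sat_anti I (le_max_left s t) hx), sat_anti I (le_max_right s t) hx⟩
  rw [hk _ (by omega), Nat.add_sub_cancel] at h1
  exact Submodule.smul_mono le_rfl inf_le_right h1

end Chevalley

/-! ### The vanishing theorem -/

/-- The Hartshorne–Lichtenbaum vanishing theorem for a complete local domain, for an ideal contained
in a prime `p` other than the maximal ideal. -/
lemma VAN.hartshorne_lichtenbaum [IsNoetherianRing R] [IsLocalRing R] [IsDomain R]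
    [IsAdicComplete (maximalIdeal R) R] {d : ℕ} (hd : ringKrullDim R = d) {I p : Ideal R}
    [hp : p.IsPrime] (hI : I ≤ p) (hpm : p ≠ maximalIdeal R) : VAN I d R := by
  obtain ⟨a, ha, H⟩ := annihilate_top hd
  have hreg : IsSMulRegular R a := fun x y h => mul_left_cancel₀ ha h
  have S := ses_smul hreg
  have hdim : Module.supportDim R (R ⧸ a • (⊤ : Submodule R R)) < d := by
    by_cases hu : IsUnit a
    · have : a • (⊤ : Submodule R R) = ⊤ := by
        obtain ⟨u, rfl⟩ := hu
        refine eq_top_iff.2 fun x _ => ?_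
        exact Submodule.mem_smul_pointwise_iff_exists _ _ _ |>.2 ⟨↑u⁻¹ * x, trivial, by simp⟩
      have : Subsingleton (R ⧸ a • (⊤ : Submodule R R)) :=
        Submodule.Quotient.subsingleton_iff.2 this
      rw [(Module.supportDim_eq_bot_iff_subsingleton R _).2 this]
      exact WithBot.bot_lt_coe _
    · have h1 := Module.supportDim_quotSMulTop_succ_eq_supportDim hreg ((mem_maximalIdeal a).2 hu)
      rw [Module.supportDim_self_eq_ringKrullDim, hd] at h1
      refine lt_of_add_lt_add_right (a := (1 : WithBot ℕ∞)) ?_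
      refine h1.trans_lt ?_
      exact_mod_cast Nat.lt_succ_self d
  -- Modulo `a` the dimension drops, so the image of `e` in `Ext^d(R/I^t, R/a)` dies at some stage
  -- `t'`, where `e` becomes `a • e'`. Pulled back along `q₁`, `q₂` below, `e'` passes through a
  -- module of positive depth, so `a` kills it.
  have hV := VAN.of_dim (hI.trans (le_maximalIdeal hp.ne_top)) hdim
  intro t e
  obtain ⟨t', ht, h1⟩ := hV t (post _ e)
  rw [pre_post] at h1
  obtain ⟨e', he'⟩ := S.cov₂ h1
  rw [post_smul_id] at he'
  obtain ⟨t'', ht', hle⟩ := exists_sat_le (fun x hx => iInf_sat hI hpm hx) t'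
  refine ⟨t'', ht.trans ht', ?_⟩
  let q₁ : (R ⧸ I ^ t'') →ₗ[R] (R ⧸ sat I t'') := Submodule.mapQ _ _ LinearMap.id (le_sat I t'')
  let q₂ : (R ⧸ sat I t'') →ₗ[R] (R ⧸ I ^ t') := Submodule.mapQ _ _ LinearMap.id hle
  have hq : q₂ ∘ₗ q₁ = qp I ht' := by ext; rfl
  rw [← qp_qp I ht ht', ← pre_pre, ← he', ← hq, ← pre_pre, map_smul, H _ (gam_sat I t''), map_zero]

end HLV

/-- Hartshorne–Lichtenbaum vanishing, domain case: if `(R,m)` is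
a complete local domain of dimension `d` and `y_1, …, y_d` are elements with
`H^d_{(y)}(R) ≠ 0`, then `y` is a system of parameters: `dim R/(y) = 0`. -/
theorem stmt14 {R : Type u} [CommRing R] [IsNoetherianRing R] [IsLocalRing R]
    [IsDomain R] [IsAdicComplete (IsLocalRing.maximalIdeal R) R]
    {d : ℕ} (hdim : ringKrullDim R = d)
    (y : Fin d → R)
    (hH : Nontrivial
      ((localCohomology (Ideal.span (Set.range y)) d).obj (ModuleCat.of R R))) :
    ringKrullDim (R ⧸ Ideal.span (Set.range y)) = 0 := by
  cases d with
  | zero =>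
    -- The ideal is zero, and a domain of dimension zero is its own quotient by it.
    have : Ideal.span (Set.range y) = ⊥ := by simp
    rw [this, ringKrullDim_eq_of_ringEquiv (RingEquiv.quotientBot R), hdim]
    rfl
  | succ n =>
    set I := Ideal.span (Set.range y)
    have hnV : ¬ HLV.VAN I (n + 1) R := fun hV =>
      not_subsingleton_iff_nontrivial.2 hH (HLV.subsingleton_localCohomology hV)
    -- If `I = R`, the quotients `R/I^t` vanish.
    have hI : I ≠ ⊤ := by
      intro hI
      refine hnV fun t e => ⟨t, le_rfl, ?_⟩
      have : e = 0 := by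
        rw [← one_smul R e]
        refine HLV.smul_ext_eq_zero (fun x => ?_) e
        obtain ⟨x, rfl⟩ := Submodule.Quotient.mk_surjective _ x
        rw [← Submodule.Quotient.mk_smul, Submodule.Quotient.mk_eq_zero, hI, Ideal.top_pow]
        trivial
      rw [this, map_zero]
    have : Nontrivial (R ⧸ I) := Ideal.Quotient.nontrivial_iff.2 hI
    refine le_antisymm ?_ ringKrullDim_nonneg_of_nontrivial
    suffices Ring.KrullDimLE 0 (R ⧸ I) by exact_mod_cast Ring.krullDimLE_iff.1 this
    -- A prime containing `I` other than the maximal ideal would make the local cohomology vanish.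
    refine Ring.krullDimLE_zero_iff.2 fun q hq => ?_
    have hp := hq.comap (Ideal.Quotient.mk I)
    have hle : I ≤ q.comap (Ideal.Quotient.mk I) := fun x hx => by
      rw [Ideal.mem_comap, Ideal.Quotient.eq_zero_iff_mem.2 hx]; exact q.zero_mem
    have hm : q.comap (Ideal.Quotient.mk I) = IsLocalRing.maximalIdeal R := by
      by_contra hne
      exact hnV (HLV.VAN.hartshorne_lichtenbaum hdim hle hne)
    have hmax : (q.comap (Ideal.Quotient.mk I)).IsMaximal := hm ▸ IsLocalRing.maximalIdeal.isMaximal R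
    exact Ideal.isMaximal_of_isIntegral_of_isMaximal_comap' (Ideal.Quotient.mk I)
      (RingHom.isIntegral_of_surjective _ Ideal.Quotient.mk_surjective) q hmax
end

section
/- Let (R,m) be a Noetherian local ring of dimension d. Suppose that for every system of parameters x_1,...,x_d and every positive integer t, the map R/(x_1,...,x_d) → R/(x_1^t,...,x_d^t) induced by multiplication by (x_1⋯x_d)^{t−1} is injective (i.e., (x_1^t,...,x_d^t) : (x_1⋯x_d)^{t−1} = (x_1,...,x_d)). Then R is Cohen–Macaulay. -/
/-!
Let `x` be a system of parameters and suppose `a * x i ∈ J := (x j : j < i)`. For `n : ℕ` replace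
each `x j` with `i ≤ j` by `x j ^ (n + 1)`: this is again a system of parameters `y`, and
`a * y i ∈ (y j : j < i)`. Multiplying by `∏ k ≠ i, y k` shows
`a * ∏ k, y k ∈ (y j ^ 2 : j < i)`, so the hypothesis with `t = 2` gives `a ∈ (y)`, hence
`a ∈ J + m ^ n`. As `n` is arbitrary, Krull's intersection theorem in `R ⧸ J` yields `a ∈ J`.
Thus `x i` is a nonzerodivisor modulo `J` for every `i`.
-/

/-- A system of parameters of a `d`-dimensional Noetherian local ring: `d`
elements generating an ideal primary to the maximal ideal. -/
def IsSOP {R : Type*} [CommRing R] [IsLocalRing R] {d : ℕ} (x : Fin d → R) : Prop :=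
  (Ideal.span (Set.range x)).radical = IsLocalRing.maximalIdeal R

/-- A Noetherian local ring of dimension `d` is Cohen–Macaulay iff every system
of parameters is a regular sequence. -/
def IsCohenMacaulayLocalRing (R : Type*) [CommRing R] [IsLocalRing R] (d : ℕ) : Prop :=
  ∀ x : Fin d → R, IsSOP x → RingTheory.Sequence.IsRegular R (List.ofFn x)

/-- A form of Krull's intersection theorem: ideals of a Noetherian local ring are closed
in the topology of the maximal ideal. -/
lemma mem_of_forall_mem_sup_pow {R : Type*} [CommRing R] [IsNoetherianRing R] [IsLocalRing R]
    (J : Ideal R) (a : R) (ha : ∀ n : ℕ, a ∈ J ⊔ IsLocalRing.maximalIdeal R ^ n) : a ∈ J := by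
  have key := Ideal.iInf_pow_smul_eq_bot_of_isLocalRing (M := R ⧸ J)
    (IsLocalRing.maximalIdeal R) (Ideal.IsPrime.ne_top inferInstance)
  rw [← Ideal.Quotient.eq_zero_iff_mem, ← Submodule.mem_bot R, ← key, Submodule.mem_iInf]
  intro n
  obtain ⟨u, hu, v, hv, rfl⟩ := Submodule.mem_sup.1 (ha n)
  rw [map_add, Ideal.Quotient.eq_zero_iff_mem.2 hu, zero_add]
  have := Submodule.smul_mem_smul hv (Submodule.mem_top (R := R) (x := (1 : R ⧸ J)))
  rwa [Algebra.smul_def, mul_one] at this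

/-- If `a` kills `y i` modulo the earlier `y j`, then `a` lies in the colon ideal that the
hypothesis with `t = 2` controls. -/
lemma mul_prod_mem_span_sq {R : Type*} [CommRing R] {d : ℕ} (y : Fin d → R) (i : Fin d) (a : R)
    (ha : a * y i ∈ Ideal.span (y '' Set.Iio i)) :
    a * ∏ k, y k ∈ Ideal.span (Set.range fun k => y k ^ 2) := by
  rw [← Finset.mul_prod_erase _ _ (Finset.mem_univ i), ← mul_assoc,
    ← Ideal.mem_colon_span_singleton]
  refine (Ideal.span_le.2 ?_) ha
  rintro _ ⟨j, hj, rfl⟩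
  have hji : j ∈ Finset.univ.erase i := Finset.mem_erase.2 ⟨ne_of_lt hj, Finset.mem_univ _⟩
  rw [SetLike.mem_coe, Ideal.mem_colon_span_singleton, ← Finset.mul_prod_erase _ _ hji,
    ← mul_assoc, ← pow_two]
  exact Ideal.mul_mem_right _ _ (Ideal.subset_span ⟨j, rfl⟩)

lemma IsSOP.of_pow {R : Type*} [CommRing R] [IsLocalRing R] {d : ℕ} {x : Fin d → R}
    (hx : IsSOP x) (e : Fin d → ℕ) (he : ∀ j, e j ≠ 0) : IsSOP fun j => x j ^ e j := by
  refine le_antisymm ?_ ?_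
  · rw [← hx]
    refine Ideal.radical_mono (Ideal.span_le.2 ?_)
    rintro _ ⟨j, rfl⟩
    exact Ideal.pow_mem_of_mem _ (Ideal.subset_span (Set.mem_range_self j)) _
      (Nat.pos_of_ne_zero (he j))
  · rw [← hx]
    refine Ideal.radical_le_radical_iff.2 (Ideal.span_le.2 ?_)
    rintro _ ⟨j, rfl⟩
    exact Ideal.mem_radical_of_pow_mem (m := e j) (Ideal.le_radical
      (Ideal.subset_span (Set.mem_range_self (f := fun j => x j ^ e j) j)))

lemma ofList_take_ofFn {R : Type*} [CommRing R] {d : ℕ} (x : Fin d → R) (i : Fin d) :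
    Ideal.ofList ((List.ofFn x).take i) = Ideal.span (x '' Set.Iio i) := by
  unfold Ideal.ofList
  congr 1
  ext r
  simp only [Set.mem_ofPred_eq, List.mem_take_iff_getElem, List.length_ofFn, List.getElem_ofFn,
    Set.mem_image, Set.mem_Iio]
  constructor
  · rintro ⟨j, hj, rfl⟩
    exact ⟨⟨j, by omega⟩, by rw [Fin.lt_def]; simp; omega, rfl⟩
  · rintro ⟨j, hj, rfl⟩
    exact ⟨j, by have := Fin.lt_def.1 hj; omega, rfl⟩

/-- let `(R,m)` be a Noetherian local ring of dimension `d`.  If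
for every system of parameters `x_1, …, x_d` and every `t ≥ 1` we have
`(x_1^t, …, x_d^t) : (x_1⋯x_d)^{t-1} = (x_1, …, x_d)` (i.e. multiplication by
`(x_1⋯x_d)^{t-1}` is injective from `R/(x)` to `R/(x^{[t]})`), then `R` is
Cohen–Macaulay. -/
theorem stmt15 {R : Type*} [CommRing R] [IsNoetherianRing R] [IsLocalRing R]
    {d : ℕ} (hdim : ringKrullDim R = d)
    (h : ∀ x : Fin d → R, IsSOP x → ∀ t : ℕ, 1 ≤ t →
      Submodule.colon (Ideal.span (Set.range fun i => x i ^ t))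
          (Ideal.span {(∏ i, x i) ^ (t - 1)}) =
        Ideal.span (Set.range x)) :
    IsCohenMacaulayLocalRing R d := by
  intro x hx
  have hxm : ∀ j, x j ∈ IsLocalRing.maximalIdeal R := fun j =>
    hx ▸ Ideal.le_radical (Ideal.subset_span ⟨j, rfl⟩)
  rw [IsLocalRing.isRegular_iff_isWeaklyRegular_of_subset_maximalIdeal
    (by simpa [List.mem_ofFn] using hxm)]
  refine ⟨fun k hk => ?_⟩
  obtain ⟨i, rfl⟩ : ∃ i : Fin d, (i : ℕ) = k := ⟨⟨k, by simpa using hk⟩, rfl⟩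
  rw [isSMulRegular_quotient_iff_mem_of_smul_mem]
  intro a ha
  rw [ofList_take_ofFn, smul_eq_mul, Ideal.mul_top] at ha ⊢
  rw [List.getElem_ofFn, smul_eq_mul, mul_comm] at ha
  refine mem_of_forall_mem_sup_pow _ _ fun n => ?_
  let e : Fin d → ℕ := fun j => if j < i then 1 else n + 1
  let y : Fin d → R := fun j => x j ^ e j
  have hy : IsSOP y := hx.of_pow e fun j => by dsimp only [e]; split_ifs <;> omega
  have hyi : a * y i ∈ Ideal.span (y '' Set.Iio i) := by
    have himg : y '' Set.Iio i = x '' Set.Iio i :=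
      Set.image_congr fun j hj => by simp [y, e, Set.mem_Iio.1 hj]
    rw [himg]
    have : a * y i = a * x i * x i ^ n := by simp [y, e]; ring
    rw [this]
    exact Ideal.mul_mem_right _ _ ha
  have hay : a ∈ Ideal.span (Set.range y) := by
    rw [← h y hy 2 (by norm_num), Ideal.mem_colon_span_singleton]
    simpa using mul_prod_mem_span_sq y i a hyi
  refine (Ideal.span_le.2 ?_) hay
  rintro _ ⟨j, rfl⟩
  by_cases hj : j < i
  · exact Ideal.mem_sup_left (Ideal.subset_span ⟨j, hj, by simp [y, e, hj]⟩)
  · refine Ideal.mem_sup_right ?_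
    have : y j = x j ^ n * x j := by simp [y, e, hj, pow_succ]
    rw [this]
    exact Ideal.mul_mem_right _ _ (Ideal.pow_mem_pow (hxm j) n)
end
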